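/- arXiv:1901.01218 — 5 statements merged into one kernel-verified Lean document; each statement's English description precedes it below -/
import Mathlib

section
/- The map t ↦ k̃(t) := θ₂(e^{-πt})² / θ₃(e^{-πt})² is a strictly decreasing bijection from (0,∞) onto (0,1). -/
noncomputable section

/-- Theta-null `θ₂(q) = ∑_{k∈ℤ} q^{(k+1/2)²}`. -/
def theta2 (q : ℝ) : ℝ := ∑' k : ℤ, q ^ (((k : ℝ) + 1/2)^2)

/-- Theta-null `θ₃(q) = ∑_{k∈ℤ} q^{k²}`. -/
def theta3 (q : ℝ) : ℝ := ∑' k : ℤ, q ^ (k^2)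

/-- Theta-null `θ₄(q) = ∑_{k∈ℤ} (-1)^k q^{k²}`. -/
def theta4 (q : ℝ) : ℝ := ∑' k : ℤ, (-1 : ℝ) ^ k * q ^ (k^2)

/-- Jacobi theta function `θ₃(z,q) = ∑_{k∈ℤ} q^{k²} e^{2πikz}` (real-valued for real z, q∈(0,1)). -/
def jTheta3 (z q : ℝ) : ℝ :=
  (∑' k : ℤ, (q : ℂ) ^ (k^2) * Complex.exp (2 * Real.pi * Complex.I * k * z)).re

/-- Jacobi theta function as a complex number. -/
def jTheta3C (z q : ℝ) : ℂ :=
  ∑' k : ℤ, (q : ℂ) ^ (k^2) * Complex.exp (2 * Real.pi * Complex.I * k * z)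

/-- Gauss hypergeometric series `₂F₁(a,b;c;x)`. -/
def hyp2F1 (a b c x : ℝ) : ℝ :=
  ∑' n : ℕ, ((ascPochhammer ℝ n).eval a * (ascPochhammer ℝ n).eval b /
    (ascPochhammer ℝ n).eval c) * x ^ n / (n.factorial : ℝ)

/-- Borwein cubic theta function `a(q)`. -/
def borA (q : ℝ) : ℝ := ∑' p : ℤ × ℤ, q ^ (p.1^2 + p.1 * p.2 + p.2^2)

/-- Borwein cubic theta function `b(q)` (real-valued). -/
def borB (q : ℝ) : ℝ :=
  (∑' p : ℤ × ℤ, (q : ℂ) ^ (p.1^2 + p.1 * p.2 + p.2^2) *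
    Complex.exp (2 * Real.pi * Complex.I * (((p.1 : ℝ) - (p.2 : ℝ)) / 3))).re

/-- Borwein cubic theta function `c(q)`. -/
def borC (q : ℝ) : ℝ :=
  ∑' p : ℤ × ℤ, q ^ ((((p.1 : ℝ)) + 1/3)^2 + ((p.1 : ℝ) + 1/3) * ((p.2 : ℝ) + 1/3) +
    (((p.2 : ℝ)) + 1/3)^2)

/-- Periodized Gaussian (heat kernel) on the torus ℝ²/(Sℤ²). -/
def heatK (S : Matrix.SpecialLinearGroup (Fin 2) ℝ) (t : ℝ) (z : Fin 2 → ℝ) : ℝ :=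
  (1/t) * ∑' l : Fin 2 → ℤ,
    Real.exp (-(Real.pi / t) *
      (((S : Matrix (Fin 2) (Fin 2) ℝ).mulVec (fun i => (l i : ℝ) + z i) 0)^2 +
       ((S : Matrix (Fin 2) (Fin 2) ℝ).mulVec (fun i => (l i : ℝ) + z i) 1)^2))

end

/-!
At nome `e^{-πt}` the theta-nulls `θ₂`, `θ₃` are the values at `a = 1/2, 0` of the kernel
`∑ exp (-π (n + a)² t)`, and `r = θ₂ / θ₃` satisfies Landen's transformation
`r(t)² = 2 r(2t) / (1 + r(2t)²)`. As `x ↦ 2x / (1 + x²)` is strictly increasing on `[0, 1]`,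
comparing `r` at `s` and `t` is the same as comparing it at `2ⁿ s` and `2ⁿ t`, and for large `n`
the decay `r(t) ≍ e^{-πt/4}` decides. Poisson summation gives `r → 1` at `0`, so the intermediate
value theorem finishes the proof.
-/

section

open Set Filter Topology Asymptotics HurwitzZeta Real

theorem bijOn_Ioi_Ioo_of_strictAntiOn {α β : Type*}
    [ConditionallyCompleteLinearOrder α] [TopologicalSpace α] [OrderTopology α]
    [DenselyOrdered α] [NoMaxOrder α]
    [LinearOrder β] [TopologicalSpace β] [OrderClosedTopology β]
    {f : α → β} {a : α} {b c : β} (hf : StrictAntiOn f (Ioi a)) (hcont : ContinuousOn f (Ioi a))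
    (hleft : Tendsto f (𝓝[>] a) (𝓝 c)) (htop : Tendsto f atTop (𝓝 b)) :
    BijOn f (Ioi a) (Ioo b c) := by
  refine ⟨fun x hx => ⟨?_, ?_⟩, hf.injOn, ?_⟩
  · obtain ⟨y, hxy⟩ := exists_gt x
    have hy : y ∈ Ioi a := lt_trans hx hxy
    refine (le_of_tendsto htop ?_).trans_lt (hf hx hy hxy)
    filter_upwards [eventually_ge_atTop y] with z hyz
    exact hf.antitoneOn hy (lt_of_lt_of_le hy hyz) hyz
  · obtain ⟨y, hay, hyx⟩ := exists_between (mem_Ioi.mp hx)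
    refine (hf hay hx hyx).trans_le (ge_of_tendsto hleft ?_)
    filter_upwards [Ioo_mem_nhdsGT hay] with z hz
    exact hf.antitoneOn hz.1 hay hz.2.le
  · exact isPreconnected_Ioi.intermediate_value_Ioo
      (le_principal_iff.mpr (Ioi_mem_atTop a)) (le_principal_iff.mpr self_mem_nhdsWithin)
      hcont htop hleft

theorem strictMonoOn_two_mul_div_one_add_sq :
    StrictMonoOn (fun x : ℝ => 2 * x / (1 + x ^ 2)) (Icc (-1) 1) := by
  intro x hx y hy hxy
  have hxy_lt_one : x * y < 1 := by nlinarith [hx.1, hx.2, hy.1, hy.2]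
  have hcross : 0 < (y - x) * (1 - x * y) := mul_pos (sub_pos.mpr hxy) (sub_pos.mpr hxy_lt_one)
  rw [div_lt_div_iff₀ (by positivity) (by positivity)]
  linarith

/-- The partition of `ℤ × ℤ` by the parity of the coordinate sum, each class being parametrized
by `ℤ × ℤ` through sums and differences. -/
noncomputable def intProdParityEquiv : (ℤ × ℤ) ⊕ (ℤ × ℤ) ≃ ℤ × ℤ :=
  Equiv.ofBijective
    (Sum.elim (fun p => (p.1 + p.2, p.1 - p.2)) (fun p => (p.1 + p.2 + 1, p.1 - p.2))) <| by
  constructor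
  · rintro (⟨a, b⟩ | ⟨a, b⟩) (⟨c, d⟩ | ⟨c, d⟩) h <;>
      simp only [Sum.elim_inl, Sum.elim_inr, Prod.mk.injEq] at h <;>
      simp only [Sum.inl.injEq, Sum.inr.injEq, Prod.mk.injEq, reduceCtorEq] <;> omega
  · rintro ⟨m, n⟩
    rcases Int.even_or_odd' (m + n) with ⟨k, hk | hk⟩
    · exact ⟨Sum.inl (k, m - k), by simp only [Sum.elim_inl, Prod.mk.injEq]; omega⟩
    · exact ⟨Sum.inr (k, m - k - 1), by simp only [Sum.elim_inr, Prod.mk.injEq]; omega⟩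

theorem hasSum_int_prod_of_parity {M : Type*} [AddCommMonoid M] [TopologicalSpace M]
    [ContinuousAdd M] {f : ℤ × ℤ → M} {x y : M}
    (heven : HasSum (fun p : ℤ × ℤ => f (p.1 + p.2, p.1 - p.2)) x)
    (hodd : HasSum (fun p : ℤ × ℤ => f (p.1 + p.2 + 1, p.1 - p.2)) y) :
    HasSum f (x + y) :=
  intProdParityEquiv.hasSum_iff.mp (HasSum.sum heven hodd)

theorem exp_le_evenKernel (a : ℝ) {t : ℝ} (ht : 0 < t) :
    exp (-π * a ^ 2 * t) ≤ evenKernel a t := by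
  simpa using le_hasSum (hasSum_int_evenKernel a ht) 0 fun _ _ => (exp_pos _).le

theorem evenKernel_pos (a : ℝ) {t : ℝ} (ht : 0 < t) : 0 < evenKernel a t :=
  (exp_pos _).trans_le (exp_le_evenKernel a ht)

theorem sq_le_intCast_add_sq {a : ℝ} (ha : |a| ≤ 1 / 2) (n : ℤ) : a ^ 2 ≤ (n + a) ^ 2 := by
  obtain ⟨hlower, hupper⟩ := abs_le.mp ha
  rcases lt_trichotomy n 0 with hn | rfl | hn
  · have : (n : ℝ) ≤ -1 := by exact_mod_cast Int.le_sub_one_of_lt hn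
    nlinarith
  · simp
  · have : (1 : ℝ) ≤ n := by exact_mod_cast hn
    nlinarith

theorem evenKernel_le_mul_exp {a s t : ℝ} (ha : |a| ≤ 1 / 2) (hs : 0 < s) (hst : s ≤ t) :
    evenKernel a t ≤ evenKernel a s * exp (-π * a ^ 2 * (t - s)) := by
  refine hasSum_le (fun n => ?_) (hasSum_int_evenKernel a (hs.trans_le hst))
    ((hasSum_int_evenKernel a hs).mul_right _)
  rw [← exp_add, exp_le_exp]
  have := mul_nonneg (mul_nonneg pi_pos.le (sub_nonneg.mpr (sq_le_intCast_add_sq ha n)))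
    (sub_nonneg.mpr hst)
  linarith

theorem isTheta_atTop_evenKernel {a : ℝ} (ha : |a| ≤ 1 / 2) :
    evenKernel a =Θ[atTop] fun t => exp (-π * a ^ 2 * t) := by
  constructor
  · refine .of_bound (evenKernel a 1 * exp (π * a ^ 2)) ?_
    filter_upwards [eventually_ge_atTop 1] with t ht
    rw [norm_of_nonneg (evenKernel_pos a (one_pos.trans_le ht)).le, norm_of_nonneg (exp_pos _).le,
      mul_assoc, ← exp_add]
    convert evenKernel_le_mul_exp ha one_pos ht using 3
    ring
  · refine .of_bound 1 ?_
    filter_upwards [eventually_gt_atTop 0] with t ht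
    rw [norm_of_nonneg (evenKernel_pos a ht).le, norm_of_nonneg (exp_pos _).le, one_mul]
    exact exp_le_evenKernel a ht

theorem hasSum_evenKernel_mul (a b : ℝ) {t : ℝ} (ht : 0 < t) :
    HasSum (fun p : ℤ × ℤ => exp (-π * ((p.1 + a) ^ 2 + (p.2 + b) ^ 2) * t))
      (evenKernel a t * evenKernel b t) := by
  have ha := hasSum_int_evenKernel a ht
  have hb := hasSum_int_evenKernel b ht
  simp_rw [mul_add, add_mul, exp_add]
  exact ha.mul hb (ha.summable.mul_of_nonneg hb.summable
    (fun _ => (exp_pos _).le) fun _ => (exp_pos _).le)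

-- Rotating the plane by 45° maps the lattice `ℤ²` to `√2` times the union of `ℤ²` and
-- `ℤ² + (1/2, 1/2)`.
theorem evenKernel_mul_evenKernel (a b : ℝ) {t : ℝ} (ht : 0 < t) :
    evenKernel a t * evenKernel b t =
      evenKernel ((a + b) / 2 : ℝ) (2 * t) * evenKernel ((a - b) / 2 : ℝ) (2 * t) +
      evenKernel ((a + b + 1) / 2 : ℝ) (2 * t) * evenKernel ((a - b + 1) / 2 : ℝ) (2 * t) := by
  refine (hasSum_evenKernel_mul a b ht).unique (hasSum_int_prod_of_parity ?_ ?_)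
  · convert hasSum_evenKernel_mul ((a + b) / 2) ((a - b) / 2) (mul_pos two_pos ht) using 3 with p
    push_cast
    ring
  · convert hasSum_evenKernel_mul ((a + b + 1) / 2) ((a - b + 1) / 2) (mul_pos two_pos ht)
      using 3 with p
    push_cast
    ring

theorem evenKernel_zero_sq {t : ℝ} (ht : 0 < t) :
    evenKernel (0 : ℝ) t ^ 2 =
      evenKernel (0 : ℝ) (2 * t) ^ 2 + evenKernel (1 / 2 : ℝ) (2 * t) ^ 2 := by
  simpa [sq] using evenKernel_mul_evenKernel 0 0 ht

theorem evenKernel_half_sq {t : ℝ} (ht : 0 < t) :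
    evenKernel (1 / 2 : ℝ) t ^ 2 =
      2 * evenKernel (1 / 2 : ℝ) (2 * t) * evenKernel (0 : ℝ) (2 * t) := by
  have hperiod : ((1 : ℝ) : UnitAddCircle) = (0 : ℝ) := AddCircle.coe_period 1
  rw [sq, evenKernel_mul_evenKernel _ _ ht, show (1 / 2 + 1 / 2 : ℝ) = 1 by norm_num,
    show (1 / 2 - 1 / 2 : ℝ) / 2 = 0 by norm_num, show (1 + 1 : ℝ) / 2 = 1 by norm_num,
    show (1 / 2 - 1 / 2 + 1 : ℝ) / 2 = 1 / 2 by norm_num, hperiod]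
  ring

theorem tendsto_exp_neg_mul_atTop_nhds_zero {p : ℝ} (hp : 0 < p) :
    Tendsto (fun t => exp (-p * t)) atTop (𝓝 0) :=
  tendsto_exp_atBot.comp (tendsto_id.const_mul_atTop_of_neg (neg_lt_zero.mpr hp))

theorem tendsto_cosKernel_atTop (a : UnitAddCircle) : Tendsto (cosKernel a) atTop (𝓝 1) := by
  obtain ⟨p, hp, hO⟩ := isBigO_atTop_cosKernel_sub a
  simpa using (hO.trans_tendsto (tendsto_exp_neg_mul_atTop_nhds_zero hp)).add_const 1

theorem tendsto_evenKernel_div_evenKernel_nhdsGT_zero (a b : UnitAddCircle) :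
    Tendsto (fun t => evenKernel a t / evenKernel b t) (𝓝[>] 0) (𝓝 1) := by
  have hcos : Tendsto (fun t => cosKernel a t⁻¹ / cosKernel b t⁻¹) (𝓝[>] 0) (𝓝 1) := by
    simpa [Function.comp_def] using ((tendsto_cosKernel_atTop a).div (tendsto_cosKernel_atTop b)
      one_ne_zero).comp tendsto_inv_nhdsGT_zero
  refine hcos.congr' ?_
  filter_upwards [self_mem_nhdsWithin] with t ht
  have hscale : (1 / t ^ (1 / 2 : ℝ)) ≠ 0 := (one_div_pos.mpr (rpow_pos_of_pos ht _)).ne'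
  rw [evenKernel_functional_equation a, evenKernel_functional_equation b,
    mul_div_mul_left _ _ hscale, one_div]

theorem theta2_exp_neg_pi_mul {t : ℝ} (ht : 0 < t) :
    theta2 (exp (-π * t)) = evenKernel (1 / 2 : ℝ) t := by
  rw [theta2, ← (hasSum_int_evenKernel (1 / 2) ht).tsum_eq]
  refine tsum_congr fun k => ?_
  rw [← exp_mul]
  ring_nf

theorem theta3_exp_neg_pi_mul {t : ℝ} (ht : 0 < t) :
    theta3 (exp (-π * t)) = evenKernel (0 : ℝ) t := by
  rw [theta3, ← (hasSum_int_evenKernel 0 ht).tsum_eq]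
  refine tsum_congr fun k => ?_
  rw [← rpow_intCast, ← exp_mul]
  push_cast
  ring_nf

/-- The quotient `θ₂ / θ₃` at nome `e^{-πt}`, that is `√k̃(t)`, in terms of Mathlib's even Hurwitz
kernel, which agrees with the theta-nulls for `t > 0`. -/
noncomputable def thetaRatio (t : ℝ) : ℝ := evenKernel (1 / 2 : ℝ) t / evenKernel (0 : ℝ) t

theorem thetaRatio_eq_theta2_div_theta3 {t : ℝ} (ht : 0 < t) :
    thetaRatio t = theta2 (exp (-π * t)) / theta3 (exp (-π * t)) := by
  rw [thetaRatio, theta2_exp_neg_pi_mul ht, theta3_exp_neg_pi_mul ht]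

theorem thetaRatio_pos {t : ℝ} (ht : 0 < t) : 0 < thetaRatio t :=
  div_pos (evenKernel_pos _ ht) (evenKernel_pos _ ht)

theorem continuousOn_thetaRatio : ContinuousOn thetaRatio (Ioi 0) :=
  (continuousOn_evenKernel _).div (continuousOn_evenKernel _) fun _ ht => (evenKernel_pos _ ht).ne'

theorem thetaRatio_sq {t : ℝ} (ht : 0 < t) :
    thetaRatio t ^ 2 = 2 * thetaRatio (2 * t) / (1 + thetaRatio (2 * t) ^ 2) := by
  have hpos := evenKernel_pos 0 (mul_pos two_pos ht)
  rw [thetaRatio, thetaRatio, div_pow, evenKernel_half_sq ht, evenKernel_zero_sq ht]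
  field_simp

theorem thetaRatio_le_one {t : ℝ} (ht : 0 < t) : thetaRatio t ≤ 1 := by
  refine (sq_le_one_iff₀ (thetaRatio_pos ht).le).mp ?_
  rw [thetaRatio_sq ht, div_le_one (by positivity)]
  linarith [sq_nonneg (thetaRatio (2 * t) - 1)]

theorem thetaRatio_two_mul_lt_iff {s t : ℝ} (hs : 0 < s) (ht : 0 < t) :
    thetaRatio (2 * t) < thetaRatio (2 * s) ↔ thetaRatio t < thetaRatio s := by
  have hmem {u : ℝ} (hu : 0 < u) : thetaRatio (2 * u) ∈ Icc (-1) 1 :=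
    have h2u : 0 < 2 * u := mul_pos two_pos hu
    ⟨by linarith [thetaRatio_pos h2u], thetaRatio_le_one h2u⟩
  rw [← strictMonoOn_two_mul_div_one_add_sq.lt_iff_lt (hmem ht) (hmem hs), ← thetaRatio_sq hs,
    ← thetaRatio_sq ht, sq_lt_sq₀ (thetaRatio_pos ht).le (thetaRatio_pos hs).le]

theorem thetaRatio_two_pow_mul_lt_iff {s t : ℝ} (hs : 0 < s) (ht : 0 < t) (n : ℕ) :
    thetaRatio (2 ^ n * t) < thetaRatio (2 ^ n * s) ↔ thetaRatio t < thetaRatio s := by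
  induction n with
  | zero => simp
  | succ n ih =>
    rw [pow_succ', mul_assoc, mul_assoc,
      thetaRatio_two_mul_lt_iff (by positivity) (by positivity), ih]

theorem isTheta_atTop_thetaRatio : thetaRatio =Θ[atTop] fun t => exp (-(π / 4) * t) := by
  have hθ₂ := isTheta_atTop_evenKernel (a := 1 / 2) (abs_of_pos one_half_pos).le
  have hθ₃ := isTheta_atTop_evenKernel (a := 0) (by norm_num)
  refine (hθ₂.div hθ₃).trans_eventuallyEq (.of_eq ?_)
  ext t
  rw [← exp_sub]
  ring_nf

theorem tendsto_thetaRatio_atTop : Tendsto thetaRatio atTop (𝓝 0) :=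
  isTheta_atTop_thetaRatio.tendsto_zero_iff.mpr <|
    tendsto_exp_neg_mul_atTop_nhds_zero (by positivity)

theorem tendsto_thetaRatio_nhdsGT_zero : Tendsto thetaRatio (𝓝[>] 0) (𝓝 1) :=
  tendsto_evenKernel_div_evenKernel_nhdsGT_zero _ _

theorem eventually_thetaRatio_mul_lt {s t : ℝ} (hs : 0 < s) (hst : s < t) :
    ∀ᶠ c in atTop, thetaRatio (c * t) < thetaRatio (c * s) := by
  have hisTheta {u : ℝ} (hu : 0 < u) :
      (fun c => thetaRatio (c * u)) =Θ[atTop] fun c => exp (-(π / 4) * (c * u)) :=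
    have hu_atTop : Tendsto (· * u) atTop atTop := tendsto_id.atTop_mul_const hu
    ⟨isTheta_atTop_thetaRatio.1.comp_tendsto hu_atTop,
      isTheta_atTop_thetaRatio.2.comp_tendsto hu_atTop⟩
  have hexp : (fun c => exp (-(π / 4) * (c * t))) =o[atTop]
      fun c => exp (-(π / 4) * (c * s)) := by
    rw [isLittleO_exp_comp_exp_comp]
    convert tendsto_id.const_mul_atTop (show 0 < π / 4 * (t - s) from
      mul_pos (by positivity) (sub_pos.mpr hst)) using 2 with c
    simp only [id]
    ring
  have hlittleO := ((hisTheta (hs.trans hst)).trans_isLittleO hexp).trans_isTheta (hisTheta hs).symm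
  filter_upwards [hlittleO.bound one_half_pos, eventually_gt_atTop 0] with c hle hc
  have hcs := thetaRatio_pos (mul_pos hc hs)
  have hct := thetaRatio_pos (mul_pos hc (hs.trans hst))
  rw [norm_of_nonneg hct.le, norm_of_nonneg hcs.le] at hle
  linarith

theorem strictAntiOn_thetaRatio : StrictAntiOn thetaRatio (Ioi 0) := by
  intro s hs t ht hst
  obtain ⟨n, hn⟩ := ((tendsto_pow_atTop_atTop_of_one_lt (one_lt_two (α := ℝ))).eventually
    (eventually_thetaRatio_mul_lt hs hst)).exists
  exact (thetaRatio_two_pow_mul_lt_iff hs ht n).mp hn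

end

theorem elliptic_modulus_strictAnti_bijOn :
    StrictAntiOn (fun t : ℝ => theta2 (Real.exp (-Real.pi * t)) ^ 2 /
        theta3 (Real.exp (-Real.pi * t)) ^ 2) (Set.Ioi 0) ∧
    Set.BijOn (fun t : ℝ => theta2 (Real.exp (-Real.pi * t)) ^ 2 /
        theta3 (Real.exp (-Real.pi * t)) ^ 2) (Set.Ioi 0) (Set.Ioo 0 1) := by
  have hanti : StrictAntiOn (fun t => thetaRatio t ^ 2) (Set.Ioi 0) := fun s hs t ht hst =>
    pow_lt_pow_left₀ (strictAntiOn_thetaRatio hs ht hst) (thetaRatio_pos ht).le two_ne_zero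
  have hbij : Set.BijOn (fun t => thetaRatio t ^ 2) (Set.Ioi 0) (Set.Ioo 0 1) :=
    bijOn_Ioi_Ioo_of_strictAntiOn hanti (continuousOn_thetaRatio.pow 2)
      (by simpa using tendsto_thetaRatio_nhdsGT_zero.pow 2)
      (by simpa using tendsto_thetaRatio_atTop.pow 2)
  have hmodulus : Set.EqOn (fun t => thetaRatio t ^ 2)
      (fun t => theta2 (Real.exp (-Real.pi * t)) ^ 2 / theta3 (Real.exp (-Real.pi * t)) ^ 2)
      (Set.Ioi 0) := fun t ht => by
    simp only [thetaRatio_eq_theta2_div_theta3 ht, div_pow]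
  exact ⟨hanti.congr hmodulus, hbij.congr hmodulus⟩
end

section
/- Ramanujan's identity: for q ∈ (0,1), with elliptic modulus k = θ₂(q)²/θ₃(q)², one has ₂F₁(1/2, 1/2; 1; k²) = θ₃(q)². -/
/-!
Both sides are compared along the map `q ↦ q²`. Rotating the square lattice by 45 degrees gives
`θ₃(q)² = θ₃(q²)² + θ₂(q²)²` and `θ₂(q)² = 2 θ₂(q²) θ₃(q²)`, so that with `l = k(q²)` one has
`k(q)² = 4 l / (1 + l)²` and `θ₃(q)² = (1 + l) θ₃(q²)²`. This is the substitution in Landen's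
transformation `F(4 l / (1 + l)²) = (1 + l) F(l²)` of `F = ₂F₁(1/2, 1/2; 1; ·)`, both sides of
which are `1 + l` times the mean of `1 / |1 + l z|` over the unit circle: the right one by
Parseval's identity for the binomial series of `(1 + l z) ^ (-1/2)`, the left one by expanding
`|1 + l z|² = (1 + l)² - 4 l sin² t`, where `z = exp (2 i t)`, in powers of `sin² t`.
Hence the quotient `F(k(q)²) / θ₃(q)²` is invariant under `q ↦ q²`, and it tends to `1` at `0`.
-/

open Filter Finset Topology
open scoped Nat

namespace RamanujanTheta

section Binomial

lemma eval_ascPochhammer_eq_factorial_mul_multichoose (a : ℝ) (n : ℕ) :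
    (ascPochhammer ℝ n).eval a = n ! * Ring.multichoose a n := by
  rw [← Polynomial.ascPochhammer_smeval_eq_eval,
    ← Ring.factorial_nsmul_multichoose_eq_ascPochhammer, nsmul_eq_mul]

lemma hasSum_multichoose_mul_cpow (a : ℂ) {z : ℂ} (hz : ‖z‖ < 1) :
    HasSum (fun n ↦ Ring.multichoose a n * z ^ n) ((1 - z) ^ (-a)) := by
  have h := (Complex.one_div_one_sub_cpow_hasFPowerSeriesOnBall_zero a).hasSum
    (y := z) (by simpa [enorm_eq_nnnorm, ← NNReal.coe_lt_coe] using hz)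
  simpa only [FormalMultilinearSeries.ofScalars_apply_eq, smul_eq_mul, zero_add, one_div,
    ← Complex.cpow_neg, ← Ring.multichoose_eq] using h

lemma hasSum_multichoose_mul_rpow (a : ℝ) {x : ℝ} (hx : |x| < 1) :
    HasSum (fun n ↦ Ring.multichoose a n * x ^ n) ((1 - x) ^ (-a)) := by
  have h := (Real.one_div_one_sub_rpow_hasFPowerSeriesOnBall_zero a).hasSum
    (y := x) (by simpa [enorm_eq_nnnorm, ← NNReal.coe_lt_coe] using hx)
  have h1x : 0 ≤ 1 - x := by linarith [le_abs_self x]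
  simpa only [FormalMultilinearSeries.ofScalars_apply_eq, smul_eq_mul, zero_add, one_div,
    ← Real.rpow_neg h1x, ← Ring.multichoose_eq] using h

lemma integral_sin_pow_two_mul (n : ℕ) :
    ∫ t in 0..Real.pi, Real.sin t ^ (2 * n) = Real.pi * Ring.multichoose (1 / 2 : ℝ) n := by
  have h : (n ! : ℝ) * ∏ i ∈ range n, (2 * (i : ℝ) + 1) / (2 * i + 2) =
      (ascPochhammer ℝ n).eval (1 / 2) := by
    induction n with
    | zero => simp
    | succ n ih =>
      rw [ascPochhammer_succ_eval, ← ih, prod_range_succ, Nat.factorial_succ]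
      push_cast
      field
  rw [eval_ascPochhammer_eq_factorial_mul_multichoose] at h
  rw [integral_sin_pow_even, mul_left_cancel₀ (by positivity) h]

end Binomial

section Parseval

lemma sum_range_sq_norm_eq_circleAverage (a : ℕ → ℂ) (N : ℕ) :
    ∑ n ∈ range N, ‖a n‖ ^ 2 =
      Real.circleAverage (fun z ↦ ‖∑ n ∈ range N, a n * z ^ n‖ ^ 2) 0 1 := by
  have hcoeff (n : ℕ) : (∑ i ∈ range N, Polynomial.monomial i (a i)).coeff n =
      if n < N then a n else 0 := by
    simp [Polynomial.finsetSum_coeff, Polynomial.coeff_monomial]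
  have h := (∑ i ∈ range N, Polynomial.monomial i (a i)).sum_sq_norm_coeff_eq_circleAverage
  simp only [Polynomial.eval_finsetSum, Polynomial.eval_monomial] at h
  rw [← h]
  refine (sum_subset_zero_on_sdiff (fun n ↦ ?_) (fun n ↦ ?_) fun n ↦ ?_).symm <;> simp_all

theorem hasSum_sq_norm_circleAverage {a : ℕ → ℂ} (ha : Summable fun n ↦ ‖a n‖) :
    HasSum (fun n ↦ ‖a n‖ ^ 2)
      (Real.circleAverage (fun z ↦ ‖∑' n, a n * z ^ n‖ ^ 2) 0 1) := by
  rw [hasSum_iff_tendsto_nat_of_nonneg fun _ ↦ sq_nonneg _]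
  simp only [sum_range_sq_norm_eq_circleAverage, Real.circleAverage_def]
  refine (intervalIntegral.tendsto_integral_filter_of_dominated_convergence
    (fun _ ↦ (∑' n, ‖a n‖) ^ 2) (.of_forall fun N ↦ ?_) (.of_forall fun N ↦ ?_)
    intervalIntegrable_const ?_).const_smul _
  · exact (by fun_prop : Continuous _).aestronglyMeasurable
  · refine .of_forall fun θ _ ↦ ?_
    rw [Real.norm_of_nonneg (sq_nonneg _)]
    gcongr
    refine (norm_sum_le _ _).trans ?_
    simpa using ha.sum_le_tsum (range N) fun _ _ ↦ norm_nonneg _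
  · refine .of_forall fun θ _ ↦ ?_
    have hsum : Summable fun n ↦ a n * circleMap 0 1 θ ^ n := .of_norm (by simpa using ha)
    exact (hsum.hasSum.tendsto_sum_nat.norm).pow 2

end Parseval

section Hypergeometric

lemma hyp2F1_one_eq_tsum (a b x : ℝ) :
    hyp2F1 a b 1 x = ∑' n, Ring.multichoose a n * Ring.multichoose b n * x ^ n := by
  refine tsum_congr fun n ↦ ?_
  rw [eval_ascPochhammer_eq_factorial_mul_multichoose,
    eval_ascPochhammer_eq_factorial_mul_multichoose, ascPochhammer_eval_one]
  field

theorem hyp2F1_self_one_sq (a : ℝ) {r : ℝ} (hr : |r| < 1) :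
    hyp2F1 a a 1 (r ^ 2) = Real.circleAverage (fun z ↦ ‖1 - z‖ ^ (-2 * a)) 0 r := by
  have hsummable : Summable fun n ↦ ‖(Ring.multichoose a n * r ^ n : ℂ)‖ := by
    simpa [← Complex.ofReal_pow, ← Complex.ofReal_mul, Complex.norm_real] using
      (hasSum_multichoose_mul_rpow a hr).summable.norm
  have hsq (n : ℕ) : ‖(Ring.multichoose a n * r ^ n : ℂ)‖ ^ 2 =
      Ring.multichoose a n * Ring.multichoose a n * (r ^ 2) ^ n := by
    rw [← Complex.ofReal_pow, ← Complex.ofReal_mul, Complex.norm_real, Real.norm_eq_abs, sq_abs]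
    ring
  rw [hyp2F1_one_eq_tsum, ← tsum_congr hsq, (hasSum_sq_norm_circleAverage hsummable).tsum_eq,
    Real.circleAverage_eq_circleAverage_zero_one (R := r)]
  refine Real.circleAverage_congr_sphere fun z hz ↦ ?_
  have hrz : ‖(r * z : ℂ)‖ < 1 := by simp_all
  have hbinom : ∑' n, (Ring.multichoose a n * r ^ n : ℂ) * z ^ n = (1 - r * z) ^ (-a : ℂ) := by
    rw [← (hasSum_multichoose_mul_cpow a hrz).tsum_eq]
    refine tsum_congr fun n ↦ ?_
    rw [← Complex.ofRealHom_eq_coe a, ← Ring.map_multichoose, Complex.ofRealHom_eq_coe, mul_pow,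
      mul_assoc]
  simp only [hbinom, add_zero]
  rw [← Complex.ofReal_neg, Complex.norm_cpow_real, ← Real.rpow_mul_natCast (norm_nonneg _)]
  congr 1
  push_cast
  ring

theorem hyp2F1_half_one_eq_integral (a : ℝ) {x : ℝ} (hx : |x| < 1) :
    hyp2F1 a (1 / 2) 1 x =
      Real.pi⁻¹ * ∫ t in 0..Real.pi, (1 - x * Real.sin t ^ 2) ^ (-a) := by
  have hsin (t : ℝ) : |x * Real.sin t ^ 2| ≤ |x| := by
    rw [abs_mul, abs_sq]
    exact mul_le_of_le_one_right (abs_nonneg x) (Real.sin_sq_le_one t)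
  have hint : HasSum (fun n ↦ ∫ t in 0..Real.pi, Ring.multichoose a n * (x * Real.sin t ^ 2) ^ n)
      (∫ t in 0..Real.pi, (1 - x * Real.sin t ^ 2) ^ (-a)) := by
    refine intervalIntegral.hasSum_integral_of_dominated_convergence
      (fun n _ ↦ ‖Ring.multichoose a n * x ^ n‖) (fun n ↦ ?_) (fun n ↦ ?_) ?_ ?_ ?_
    · exact (by fun_prop : Continuous _).aestronglyMeasurable
    · refine .of_forall fun t _ ↦ ?_
      rw [norm_mul, norm_mul, norm_pow, norm_pow]
      gcongr
      exact hsin t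
    · exact .of_forall fun _ _ ↦ (hasSum_multichoose_mul_rpow a hx).summable.norm
    · exact intervalIntegrable_const
    · exact .of_forall fun t _ ↦ hasSum_multichoose_mul_rpow a ((hsin t).trans_lt hx)
  rw [← hint.tsum_eq, hyp2F1_one_eq_tsum, ← tsum_mul_left]
  refine tsum_congr fun n ↦ ?_
  simp only [mul_pow, ← mul_assoc, ← pow_mul]
  rw [intervalIntegral.integral_const_mul, integral_sin_pow_two_mul]
  field

lemma sq_norm_one_sub_circleMap (R θ : ℝ) :
    ‖1 - circleMap 0 R θ‖ ^ 2 = 1 - 2 * R * Real.cos θ + R ^ 2 := by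
  have hcircle : circleMap 0 R θ = ⟨R * Real.cos θ, R * Real.sin θ⟩ := by
    apply Complex.ext <;> simp [circleMap_zero, Complex.exp_re, Complex.exp_im]
  rw [hcircle, Complex.sq_norm, Complex.normSq_apply]
  simp only [Complex.sub_re, Complex.sub_im, Complex.one_re, Complex.one_im]
  linear_combination R ^ 2 * Real.sin_sq_add_cos_sq θ

theorem hyp2F1_quadratic_transformation (a : ℝ) {k : ℝ} (hk : k ∈ Set.Ico (0 : ℝ) 1) :
    hyp2F1 a (1 / 2) 1 (4 * k / (1 + k) ^ 2) = (1 + k) ^ (2 * a) * hyp2F1 a a 1 (k ^ 2) := by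
  obtain ⟨hk0, hk1⟩ := hk
  have hx : |4 * k / (1 + k) ^ 2| < 1 := by
    rw [abs_of_nonneg (by positivity), div_lt_one (by positivity)]
    nlinarith [mul_pos (sub_pos.2 hk1) (sub_pos.2 hk1)]
  have hnorm (t : ℝ) : (1 - 4 * k / (1 + k) ^ 2 * Real.sin t ^ 2) ^ (-a) =
      (1 + k) ^ (2 * a) * ‖1 - circleMap 0 (-k) (2 * t)‖ ^ (-2 * a) := by
    have hsq : 1 - 4 * k / (1 + k) ^ 2 * Real.sin t ^ 2 =
        ‖1 - circleMap 0 (-k) (2 * t)‖ ^ 2 / (1 + k) ^ 2 := by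
      rw [sq_norm_one_sub_circleMap, Real.sin_sq_eq_half_sub]
      field
    rw [hsq, Real.div_rpow (by positivity) (by positivity), ← Real.rpow_natCast_mul (by positivity),
      ← Real.rpow_natCast_mul (by positivity), div_eq_mul_inv, ← Real.rpow_neg (by positivity),
      mul_comm]
    congr 2 <;> push_cast <;> ring
  calc hyp2F1 a (1 / 2) 1 (4 * k / (1 + k) ^ 2)
      = Real.pi⁻¹ * ∫ t in 0..Real.pi,
          (1 + k) ^ (2 * a) * ‖1 - circleMap 0 (-k) (2 * t)‖ ^ (-2 * a) := by
        simp only [hyp2F1_half_one_eq_integral a hx, hnorm]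
    _ = (1 + k) ^ (2 * a) * Real.circleAverage (fun z ↦ ‖1 - z‖ ^ (-2 * a)) 0 (-k) := by
        rw [intervalIntegral.integral_const_mul, Real.circleAverage_def,
          intervalIntegral.integral_comp_mul_left
            (fun θ ↦ ‖1 - circleMap 0 (-k) θ‖ ^ (-2 * a)) two_ne_zero,
          mul_zero, smul_eq_mul, smul_eq_mul, mul_inv]
        ring
    _ = (1 + k) ^ (2 * a) * hyp2F1 a a 1 (k ^ 2) := by
        rw [Real.circleAverage_neg_radius, hyp2F1_self_one_sq a (by rwa [abs_of_nonneg hk0])]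

lemma ordinaryHypergeometricSeries_radius_pos (a b c : ℝ) :
    0 < (ordinaryHypergeometricSeries ℝ a b c).radius := by
  by_cases! h : ∀ k : ℕ, (k : ℝ) ≠ -a ∧ (k : ℝ) ≠ -b ∧ (k : ℝ) ≠ -c
  · rw [ordinaryHypergeometricSeries_radius_eq_one ℝ a b c h]
    exact one_pos
  · obtain ⟨k, hk⟩ := h
    suffices (ordinaryHypergeometricSeries ℝ a b c).radius = ⊤ by simp [this]
    by_cases ha : (k : ℝ) = -a
    · rw [← neg_eq_iff_eq_neg.2 ha, ordinaryHypergeometric_radius_top_of_neg_nat₁]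
    by_cases hb : (k : ℝ) = -b
    · rw [← neg_eq_iff_eq_neg.2 hb, ordinaryHypergeometric_radius_top_of_neg_nat₂]
    · rw [← neg_eq_iff_eq_neg.2 (hk ha hb), ordinaryHypergeometric_radius_top_of_neg_nat₃]

lemma hyp2F1_eq_ordinaryHypergeometric (a b c : ℝ) :
    hyp2F1 a b c = ordinaryHypergeometric a b c := by
  ext x
  simp only [hyp2F1, ordinaryHypergeometric_eq_tsum, smul_eq_mul]
  exact tsum_congr fun n ↦ by ring

theorem tendsto_hyp2F1_nhds_zero (a b c : ℝ) : Tendsto (hyp2F1 a b c) (𝓝 0) (𝓝 1) := by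
  have hcont : ContinuousAt (ordinaryHypergeometric a b c : ℝ → ℝ) 0 :=
    ((ordinaryHypergeometricSeries ℝ a b c).hasFPowerSeriesOnBall
      (ordinaryHypergeometricSeries_radius_pos a b c)).analyticAt.continuousAt
  simpa [ContinuousAt, hyp2F1_eq_ordinaryHypergeometric] using hcont

end Hypergeometric

section Theta

open HurwitzZeta

/-- The decomposition of `ℤ × ℤ` into the pairs `(a + b, a - b)`, with coordinates of equal parity,
and the pairs `(a + b + 1, a - b)`, with coordinates of opposite parity. -/
noncomputable def intProdParityEquiv : (ℤ × ℤ) ⊕ (ℤ × ℤ) ≃ ℤ × ℤ :=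
  Equiv.ofBijective
    (Sum.elim (fun p ↦ (p.1 + p.2, p.1 - p.2)) fun p ↦ (p.1 + p.2 + 1, p.1 - p.2)) <| by
    constructor
    · rintro (⟨a, b⟩ | ⟨a, b⟩) (⟨c, d⟩ | ⟨c, d⟩) h <;>
        simp only [Sum.elim_inl, Sum.elim_inr, Prod.mk.injEq, Sum.inl.injEq, Sum.inr.injEq,
          reduceCtorEq] at h ⊢ <;>
        omega
    · rintro ⟨m, n⟩
      rcases Int.even_or_odd' (m + n) with ⟨a, h | h⟩
      · exact ⟨.inl (a, a - n), Prod.ext (by dsimp only [Sum.elim_inl]; omega) (sub_sub_cancel a n)⟩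
      · exact ⟨.inr (a, a - n), Prod.ext (by dsimp only [Sum.elim_inr]; omega) (sub_sub_cancel a n)⟩

lemma intProdParityEquiv_inl (p : ℤ × ℤ) :
    intProdParityEquiv (.inl p) = (p.1 + p.2, p.1 - p.2) := rfl

lemma intProdParityEquiv_inr (p : ℤ × ℤ) :
    intProdParityEquiv (.inr p) = (p.1 + p.2 + 1, p.1 - p.2) := rfl

lemma hasSum_evenKernel_mul_evenKernel (r s : ℝ) {t : ℝ} (ht : 0 < t) :
    HasSum (fun p : ℤ × ℤ ↦ Real.exp (-Real.pi * ((p.1 + r) ^ 2 + (p.2 + s) ^ 2) * t))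
      (evenKernel r t * evenKernel s t) := by
  have h (a : ℝ) := hasSum_int_evenKernel a ht
  have hsummable := (h r).summable.mul_of_nonneg (h s).summable
    (fun _ ↦ (Real.exp_pos _).le) (fun _ ↦ (Real.exp_pos _).le)
  convert! (h r).mul (h s) hsummable using 2 with p
  rw [← Real.exp_add]
  ring_nf

-- `(a + b + r)² + (a - b + s)² = 2 (a + (r + s) / 2)² + 2 (b + (r - s) / 2)²`
theorem evenKernel_mul_evenKernel (r s : ℝ) {t : ℝ} (ht : 0 < t) :
    evenKernel r t * evenKernel s t =
      evenKernel ((r + s) / 2 : ℝ) (2 * t) * evenKernel ((r - s) / 2 : ℝ) (2 * t) +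
      evenKernel ((r + s + 1) / 2 : ℝ) (2 * t) * evenKernel ((r - s + 1) / 2 : ℝ) (2 * t) := by
  have h := intProdParityEquiv.hasSum_iff.2 (hasSum_evenKernel_mul_evenKernel r s ht)
  refine h.unique (HasSum.sum ?_ ?_)
  · convert! hasSum_evenKernel_mul_evenKernel ((r + s) / 2) ((r - s) / 2) (mul_pos two_pos ht)
      using 2 with p
    simp only [Function.comp_apply, intProdParityEquiv_inl]
    push_cast
    ring_nf
  · convert! hasSum_evenKernel_mul_evenKernel ((r + s + 1) / 2) ((r - s + 1) / 2)
      (mul_pos two_pos ht) using 2 with p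
    simp only [Function.comp_apply, intProdParityEquiv_inr]
    push_cast
    ring_nf

theorem tendsto_evenKernel_atTop (a : UnitAddCircle) :
    Tendsto (evenKernel a) atTop (𝓝 (if a = 0 then 1 else 0)) := by
  obtain ⟨p, hp, hO⟩ := isBigO_atTop_evenKernel_sub a
  have hexp : Tendsto (fun t : ℝ ↦ Real.exp (-p * t)) atTop (𝓝 0) :=
    Real.tendsto_exp_atBot.comp (tendsto_id.const_mul_atTop_of_neg (neg_neg_of_pos hp))
  simpa using (hO.trans_tendsto hexp).add_const (if a = 0 then 1 else 0)

lemma coe_half_ne_zero : ((1 / 2 : ℝ) : UnitAddCircle) ≠ 0 := by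
  rw [Ne, AddCircle.coe_eq_zero_iff_of_mem_Ico (by norm_num)]
  norm_num

lemma theta3_exp_neg_pi_mul {t : ℝ} (ht : 0 < t) :
    theta3 (Real.exp (-Real.pi * t)) = evenKernel 0 t := by
  rw [← AddCircle.coe_zero, ← (hasSum_int_evenKernel 0 ht).tsum_eq]
  refine tsum_congr fun n ↦ ?_
  rw [← Real.rpow_intCast, ← Real.exp_mul]
  push_cast
  ring_nf

lemma theta2_exp_neg_pi_mul {t : ℝ} (ht : 0 < t) :
    theta2 (Real.exp (-Real.pi * t)) = evenKernel (1 / 2 : ℝ) t := by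
  rw [← (hasSum_int_evenKernel (1 / 2) ht).tsum_eq]
  refine tsum_congr fun n ↦ ?_
  rw [← Real.exp_mul]
  ring_nf

lemma exists_eq_exp_neg_pi_mul {q : ℝ} (hq : q ∈ Set.Ioo (0 : ℝ) 1) :
    ∃ t > 0, q = Real.exp (-Real.pi * t) := by
  refine ⟨-Real.log q / Real.pi, div_pos (neg_pos.2 (Real.log_neg hq.1 hq.2)) Real.pi_pos, ?_⟩
  rw [neg_mul, mul_div_cancel₀ _ Real.pi_ne_zero, neg_neg, Real.exp_log hq.1]

lemma exp_neg_pi_mul_sq (t : ℝ) :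
    Real.exp (-Real.pi * t) ^ 2 = Real.exp (-Real.pi * (2 * t)) := by
  rw [← Real.exp_nat_mul]
  ring_nf

theorem theta3_sq {q : ℝ} (hq : q ∈ Set.Ioo (0 : ℝ) 1) :
    theta3 q ^ 2 = theta3 (q ^ 2) ^ 2 + theta2 (q ^ 2) ^ 2 := by
  obtain ⟨t, ht, rfl⟩ := exists_eq_exp_neg_pi_mul hq
  have h2t : 0 < 2 * t := mul_pos two_pos ht
  rw [exp_neg_pi_mul_sq, theta3_exp_neg_pi_mul ht, theta3_exp_neg_pi_mul h2t,
    theta2_exp_neg_pi_mul h2t]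
  simpa [sq] using evenKernel_mul_evenKernel 0 0 ht

theorem theta2_sq {q : ℝ} (hq : q ∈ Set.Ioo (0 : ℝ) 1) :
    theta2 q ^ 2 = 2 * theta2 (q ^ 2) * theta3 (q ^ 2) := by
  obtain ⟨t, ht, rfl⟩ := exists_eq_exp_neg_pi_mul hq
  have h2t : 0 < 2 * t := mul_pos two_pos ht
  have hone : ((1 : ℝ) : UnitAddCircle) = 0 := AddCircle.coe_period 1
  have h := evenKernel_mul_evenKernel (1 / 2) (1 / 2) ht
  rw [exp_neg_pi_mul_sq, theta2_exp_neg_pi_mul ht, theta3_exp_neg_pi_mul h2t,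
    theta2_exp_neg_pi_mul h2t]
  rw [add_halves, sub_self, zero_div, one_add_one_eq_two, div_self two_ne_zero, zero_add, hone,
    AddCircle.coe_zero] at h
  linear_combination h

theorem theta3_nonneg {q : ℝ} (hq : 0 ≤ q) : 0 ≤ theta3 q :=
  tsum_nonneg fun _ ↦ zpow_nonneg hq _

theorem theta2_nonneg {q : ℝ} (hq : 0 ≤ q) : 0 ≤ theta2 q :=
  tsum_nonneg fun _ ↦ Real.rpow_nonneg hq _

lemma tendsto_nhdsGT_zero_of_exp_neg_pi_mul {f g : ℝ → ℝ} {F : Filter ℝ}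
    (hfg : ∀ t > 0, f (Real.exp (-Real.pi * t)) = g t) (hg : Tendsto g atTop F) :
    Tendsto f (𝓝[>] 0) F := by
  have hdiv : Tendsto (fun x ↦ -x / Real.pi) atBot atTop :=
    tendsto_neg_atBot_atTop.atTop_div_const Real.pi_pos
  rw [← Real.tendsto_comp_exp_atBot]
  refine (hg.comp hdiv).congr' ?_
  filter_upwards [hdiv.eventually_gt_atTop 0] with x hx
  rw [Function.comp_apply, ← hfg _ hx]
  field_simp

theorem tendsto_theta3_nhdsGT_zero : Tendsto theta3 (𝓝[>] 0) (𝓝 1) :=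
  tendsto_nhdsGT_zero_of_exp_neg_pi_mul (fun _ ↦ theta3_exp_neg_pi_mul)
    (by simpa using tendsto_evenKernel_atTop 0)

theorem tendsto_theta2_nhdsGT_zero : Tendsto theta2 (𝓝[>] 0) (𝓝 0) :=
  tendsto_nhdsGT_zero_of_exp_neg_pi_mul (fun _ ↦ theta2_exp_neg_pi_mul)
    (by simpa only [if_neg coe_half_ne_zero] using tendsto_evenKernel_atTop (1 / 2 : ℝ))

end Theta

section Descent

lemma pow_mem_Ioo_zero_one {q : ℝ} (hq : q ∈ Set.Ioo (0 : ℝ) 1) {n : ℕ} (hn : n ≠ 0) :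
    q ^ n ∈ Set.Ioo (0 : ℝ) 1 :=
  ⟨pow_pos hq.1 n, pow_lt_one₀ hq.1.le hq.2 hn⟩

theorem forall_mem_Ioo_of_eventually_nhdsGT_zero_of_pow {P : ℝ → Prop} {m : ℕ} (hm : 1 < m)
    (hP : ∀ᶠ q in 𝓝[>] 0, P q) (hpow : ∀ q ∈ Set.Ioo (0 : ℝ) 1, P (q ^ m) → P q) :
    ∀ q ∈ Set.Ioo (0 : ℝ) 1, P q := by
  intro q hq
  have htendsto : Tendsto (fun n ↦ q ^ m ^ n) atTop (𝓝[>] 0) :=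
    tendsto_nhdsWithin_iff.2 ⟨(tendsto_pow_atTop_nhds_zero_of_lt_one hq.1.le hq.2).comp
      (tendsto_pow_atTop_atTop_of_one_lt hm), .of_forall fun _ ↦ pow_pos hq.1 _⟩
  obtain ⟨n, hn⟩ := (htendsto.eventually hP).exists
  induction n with
  | zero => simpa only [pow_zero, pow_one] using hn
  | succ n ih =>
    refine ih (hpow _ (pow_mem_Ioo_zero_one hq (by positivity)) ?_)
    rwa [← pow_mul, ← pow_succ]

theorem eqOn_const_of_tendsto_nhdsGT_zero_of_pow {X : Type*} [TopologicalSpace X] [T1Space X]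
    {f : ℝ → X} {l : X} {m : ℕ} (hm : 1 < m) (hf : Tendsto f (𝓝[>] 0) (𝓝 l))
    (hpow : ∀ q ∈ Set.Ioo (0 : ℝ) 1, f (q ^ m) = f q) :
    Set.EqOn f (fun _ ↦ l) (Set.Ioo 0 1) := by
  intro q hq
  by_contra hne
  refine forall_mem_Ioo_of_eventually_nhdsGT_zero_of_pow (P := fun x ↦ f x ≠ f q) hm
    (hf.eventually_ne (Ne.symm hne)) (fun x hx ↦ ?_) q hq rfl
  rw [hpow x hx]
  exact id

end Descent

section Modulus

theorem theta3_sq_sub_theta2_sq {q : ℝ} (hq : q ∈ Set.Ioo (0 : ℝ) 1) :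
    theta3 q ^ 2 - theta2 q ^ 2 = (theta3 (q ^ 2) - theta2 (q ^ 2)) ^ 2 := by
  rw [theta3_sq hq, theta2_sq hq]
  ring

theorem theta2_lt_theta3 : ∀ q ∈ Set.Ioo (0 : ℝ) 1, theta2 q < theta3 q := by
  refine forall_mem_Ioo_of_eventually_nhdsGT_zero_of_pow one_lt_two
    (tendsto_theta2_nhdsGT_zero.eventually_lt tendsto_theta3_nhdsGT_zero one_pos)
    fun q hq hlt ↦ lt_of_pow_lt_pow_left₀ 2 (theta3_nonneg hq.1.le) (sub_pos.1 ?_)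
  rw [theta3_sq_sub_theta2_sq hq]
  exact pow_pos (sub_pos.2 hlt) 2

theorem theta3_pos {q : ℝ} (hq : q ∈ Set.Ioo (0 : ℝ) 1) : 0 < theta3 q :=
  (theta2_nonneg hq.1.le).trans_lt (theta2_lt_theta3 q hq)

/-- The elliptic modulus `k` as a function of the nome `q`. -/
noncomputable def ellipticModulus (q : ℝ) : ℝ := theta2 q ^ 2 / theta3 q ^ 2

theorem ellipticModulus_mem_Ico {q : ℝ} (hq : q ∈ Set.Ioo (0 : ℝ) 1) :
    ellipticModulus q ∈ Set.Ico (0 : ℝ) 1 := by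
  refine ⟨by unfold ellipticModulus; positivity, ?_⟩
  rw [ellipticModulus, div_lt_one (pow_pos (theta3_pos hq) 2)]
  exact pow_lt_pow_left₀ (theta2_lt_theta3 q hq) (theta2_nonneg hq.1.le) two_ne_zero

theorem theta3_sq_eq_one_add_ellipticModulus_mul {q : ℝ} (hq : q ∈ Set.Ioo (0 : ℝ) 1) :
    theta3 q ^ 2 = (1 + ellipticModulus (q ^ 2)) * theta3 (q ^ 2) ^ 2 := by
  have h := (theta3_pos (pow_mem_Ioo_zero_one hq two_ne_zero)).ne'
  rw [theta3_sq hq, ellipticModulus]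
  field

theorem ellipticModulus_sq {q : ℝ} (hq : q ∈ Set.Ioo (0 : ℝ) 1) :
    ellipticModulus q ^ 2 = 4 * ellipticModulus (q ^ 2) / (1 + ellipticModulus (q ^ 2)) ^ 2 := by
  have h := (theta3_pos (pow_mem_Ioo_zero_one hq two_ne_zero)).ne'
  simp only [ellipticModulus]
  rw [theta2_sq hq, theta3_sq hq]
  field

theorem tendsto_ellipticModulus_nhdsGT_zero : Tendsto ellipticModulus (𝓝[>] 0) (𝓝 0) := by
  have h := (tendsto_theta2_nhdsGT_zero.pow 2).div (tendsto_theta3_nhdsGT_zero.pow 2)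
    (pow_ne_zero 2 one_ne_zero)
  rwa [zero_pow two_ne_zero, zero_div] at h

end Modulus

theorem hyp2F1_ellipticModulus_div_theta3_sq {q : ℝ} (hq : q ∈ Set.Ioo (0 : ℝ) 1) :
    hyp2F1 (1 / 2) (1 / 2) 1 (ellipticModulus (q ^ 2) ^ 2) / theta3 (q ^ 2) ^ 2 =
      hyp2F1 (1 / 2) (1 / 2) 1 (ellipticModulus q ^ 2) / theta3 q ^ 2 := by
  have hk := ellipticModulus_mem_Ico (pow_mem_Ioo_zero_one hq two_ne_zero)
  have hone : 1 + ellipticModulus (q ^ 2) ≠ 0 := by linarith [hk.1]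
  rw [ellipticModulus_sq hq, hyp2F1_quadratic_transformation (1 / 2) hk,
    theta3_sq_eq_one_add_ellipticModulus_mul hq, mul_one_div_cancel two_ne_zero, Real.rpow_one,
    mul_div_mul_left _ _ hone]

theorem tendsto_hyp2F1_ellipticModulus_div_theta3_sq (a b c : ℝ) :
    Tendsto (fun q ↦ hyp2F1 a b c (ellipticModulus q ^ 2) / theta3 q ^ 2) (𝓝[>] 0) (𝓝 1) := by
  have hk : Tendsto (fun q ↦ ellipticModulus q ^ 2) (𝓝[>] 0) (𝓝 0) := by
    simpa using tendsto_ellipticModulus_nhdsGT_zero.pow 2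
  have h := ((tendsto_hyp2F1_nhds_zero a b c).comp hk).div
    (tendsto_theta3_nhdsGT_zero.pow 2) (pow_ne_zero 2 one_ne_zero)
  rwa [one_pow, div_one] at h

end RamanujanTheta

open RamanujanTheta

theorem ramanujan_identity (q : ℝ) (hq : q ∈ Set.Ioo (0:ℝ) 1) :
    hyp2F1 (1/2) (1/2) 1 ((theta2 q ^ 2 / theta3 q ^ 2) ^ 2) = theta3 q ^ 2 := by
  have h : hyp2F1 (1 / 2) (1 / 2) 1 (ellipticModulus q ^ 2) / theta3 q ^ 2 = 1 :=
    eqOn_const_of_tendsto_nhdsGT_zero_of_pow one_lt_two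
      (tendsto_hyp2F1_ellipticModulus_div_theta3_sq (1 / 2) (1 / 2) 1)
      (fun _ ↦ hyp2F1_ellipticModulus_div_theta3_sq) hq
  exact (div_eq_one_iff_eq (pow_pos (theta3_pos hq) 2).ne').1 h
end

section
/- ₂F₁(1/2, 1/2; 1; 1/2) = √π · Γ(1) / Γ(3/4)² = Γ(1/4) / (√2 · Γ(1/2) Γ(3/4)), and hence √2 · ₂F₁(1/2, 1/2; 1; 1/2) = Γ(1/4) / (Γ(1/2) Γ(3/4)) = 2 θ₄(e^{-π})². -/
/-!
The evaluations combine two computations of the complete elliptic integral `K(1/2)`.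

The integral `∫ dt / √((t² + a²)(t² + b²))` over the line is unchanged when `(a, b)` is replaced by
its arithmetic and geometric means (substitute `(t - ab/t)/2`). Since `θ₃(q²)²` and `θ₄(q²)²` are
the arithmetic and geometric means of `θ₃(q)²` and `θ₄(q)²`, iterating `q ↦ q²` shows that the
integral at `(θ₃(q)², θ₄(q)²)` is that at `(1, 1)`, namely `π`. Its trigonometric form is an
elliptic integral, whose binomial expansion gives `₂F₁(1/2, 1/2; 1; 1 - θ₄(q)⁴/θ₃(q)⁴) = θ₃(q)²`.
At `q = e^{-π}` Poisson summation and the same mean identities yield `θ₃² = √2 θ₄²`, so the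
argument is `1/2`.

Exchanging `a` and `b` relates `K(1/2)` to the lemniscate integral `K(-1) = ∫₀¹ dx / √(1 - x⁴)`,
a beta integral, and Euler's reflection formula relates the resulting gamma values.
-/

section

open Real Set MeasureTheory Filter Topology

section Theta

variable {q r : ℝ}

lemma zpow_sq_eq_pow_natAbs_sq {G : Type*} [DivInvMonoid G] (x : G) (k : ℤ) :
    x ^ (k ^ 2) = x ^ (k.natAbs ^ 2) := by
  rw [← zpow_natCast, Nat.cast_pow, Int.natAbs_sq]

lemma neg_zpow_sq {K : Type*} [Field K] (x : K) (k : ℤ) :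
    (-x) ^ (k ^ 2) = (-1) ^ k * x ^ (k ^ 2) := by
  rw [← neg_one_mul, mul_zpow]
  rcases Int.even_or_odd k with hk | hk
  · rw [(hk.pow_of_ne_zero two_ne_zero).neg_one_zpow, hk.neg_one_zpow]
  · rw [hk.pow.neg_one_zpow, hk.neg_one_zpow]

lemma zpow_add_sq_mul_zpow_sub_sq {G : Type*} [DivInvMonoid G] (x : G) (u v : ℤ) :
    x ^ ((u + v) ^ 2) * x ^ ((u - v) ^ 2) = (x ^ 2) ^ (u ^ 2) * (x ^ 2) ^ (v ^ 2) := by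
  simp only [zpow_sq_eq_pow_natAbs_sq, ← pow_mul, ← pow_add]
  congr 1
  zify
  simp only [sq_abs]
  ring

lemma theta4_eq_theta3_neg (q : ℝ) : theta4 q = theta3 (-q) :=
  tsum_congr fun k ↦ (neg_zpow_sq q k).symm

lemma summable_zpow_sq (hq : |q| < 1) : Summable fun k : ℤ ↦ q ^ (k ^ 2) := by
  have summable_nat : Summable fun n : ℕ ↦ q ^ (n ^ 2) := by
    refine .of_norm_bounded (summable_geometric_of_lt_one (abs_nonneg q) hq) fun n ↦ ?_
    rw [norm_pow, Real.norm_eq_abs]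
    exact pow_le_pow_of_le_one (abs_nonneg q) hq.le (Nat.le_self_pow two_ne_zero n)
  refine .of_nat_of_neg ?_ ?_ <;> simpa [zpow_sq_eq_pow_natAbs_sq] using summable_nat

lemma one_le_theta3 (hq₀ : 0 ≤ q) (hq₁ : q < 1) : 1 ≤ theta3 q := by
  simpa [theta3] using
    (summable_zpow_sq (by rwa [abs_of_nonneg hq₀])).le_tsum 0 fun k _ ↦ by positivity

lemma abs_theta3_le_theta3_abs (hq : |q| < 1) : |theta3 q| ≤ theta3 |q| := by
  simpa [theta3, abs_zpow] using norm_tsum_le_tsum_norm (summable_zpow_sq hq).norm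

lemma abs_theta4_le_theta3 (hq₀ : 0 ≤ q) (hq₁ : q < 1) : |theta4 q| ≤ theta3 q := by
  rw [theta4_eq_theta3_neg]
  have le := abs_theta3_le_theta3_abs (q := -q) (by rwa [abs_neg, abs_of_nonneg hq₀])
  rwa [abs_neg, abs_of_nonneg hq₀] at le

lemma continuousAt_theta3 (hq : |q| < 1) : ContinuousAt theta3 q := by
  obtain ⟨r, hqr, hr⟩ := exists_between hq
  have hr₀ : 0 ≤ r := (abs_nonneg q).trans hqr.le
  have continuousOn : ContinuousOn theta3 {x | |x| ≤ r} := by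
    refine continuousOn_tsum (fun k ↦ ?_)
      (summable_zpow_sq (by rwa [abs_of_nonneg hr₀])) fun k x hx ↦ ?_
    · simp only [zpow_sq_eq_pow_natAbs_sq]
      fun_prop
    · rw [norm_zpow]
      exact zpow_le_zpow_left₀ (sq_nonneg k) (norm_nonneg x) hx
  exact continuousOn.continuousAt
    (Filter.mem_of_superset ((isOpen_lt continuous_abs continuous_const).mem_nhds hqr)
      fun x (hx : |x| < r) ↦ hx.le)

lemma theta3_zero : theta3 0 = 1 := by
  simp [theta3, zpow_sq_eq_pow_natAbs_sq, zero_pow_eq]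

lemma tsum_eq_tsum_add_sub_of_odd_eq_zero {M : Type*} [AddCommMonoid M] [TopologicalSpace M]
    {f : ℤ × ℤ → M} (hf : ∀ p, Odd (p.1 + p.2) → f p = 0) :
    ∑' p, f p = ∑' p : ℤ × ℤ, f (p.1 + p.2, p.1 - p.2) := by
  have injective : Function.Injective fun p : ℤ × ℤ ↦ (p.1 + p.2, p.1 - p.2) := by
    rintro ⟨a, b⟩ ⟨c, d⟩ h
    simp only [Prod.mk.injEq] at h ⊢
    omega
  refine (injective.tsum_eq fun p hp ↦ ?_).symm
  obtain ⟨u, hu⟩ : Even (p.1 + p.2) := Int.not_odd_iff_even.1 fun h ↦ hp (hf p h)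
  exact ⟨(u, u - p.2), by ext <;> simp; omega⟩

lemma theta3_mul_theta3 (hq : |q| < 1) (hr : |r| < 1) :
    theta3 q * theta3 r = ∑' p : ℤ × ℤ, q ^ (p.1 ^ 2) * r ^ (p.2 ^ 2) :=
  tsum_mul_tsum_of_summable_norm (summable_zpow_sq hq).norm (summable_zpow_sq hr).norm

lemma summable_zpow_sq_mul_zpow_sq (hq : |q| < 1) (hr : |r| < 1) :
    Summable fun p : ℤ × ℤ ↦ q ^ (p.1 ^ 2) * r ^ (p.2 ^ 2) :=
  summable_mul_of_summable_norm (f := fun k : ℤ ↦ q ^ (k ^ 2)) (g := fun k : ℤ ↦ r ^ (k ^ 2))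
    (summable_zpow_sq hq).norm (summable_zpow_sq hr).norm

-- Adding the two products cancels the lattice points `(m, n)` with `m + n` odd; the remaining
-- ones are exactly the points `(u + v, u - v)`.
lemma theta3_mul_add_theta3_neg_mul (hq : |q| < 1) (hr : |r| < 1) :
    theta3 q * theta3 r + theta3 (-q) * theta3 (-r) =
      2 * ∑' p : ℤ × ℤ, q ^ ((p.1 + p.2) ^ 2) * r ^ ((p.1 - p.2) ^ 2) := by
  have hq' : |-q| < 1 := by rwa [abs_neg]
  have hr' : |-r| < 1 := by rwa [abs_neg]
  have neg_term (m n : ℤ) : (-q) ^ (m ^ 2) * (-r) ^ (n ^ 2) =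
      (-1) ^ (m + n) * (q ^ (m ^ 2) * r ^ (n ^ 2)) := by
    rw [neg_zpow_sq, neg_zpow_sq, zpow_add₀ (by norm_num)]
    ring
  rw [theta3_mul_theta3 hq hr, theta3_mul_theta3 hq' hr',
    ← (summable_zpow_sq_mul_zpow_sq hq hr).tsum_add (summable_zpow_sq_mul_zpow_sq hq' hr'),
    tsum_eq_tsum_add_sub_of_odd_eq_zero, ← tsum_mul_left]
  · refine tsum_congr fun p ↦ ?_
    have even : Even (p.1 + p.2 + (p.1 - p.2)) := ⟨p.1, by ring⟩
    rw [neg_term, even.neg_one_zpow]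
    ring
  · intro p odd
    rw [neg_term, odd.neg_one_zpow]
    ring

lemma abs_pow_lt_one (hq : |q| < 1) {n : ℕ} (hn : n ≠ 0) : |q ^ n| < 1 := by
  rw [abs_pow]
  exact pow_lt_one₀ (abs_nonneg q) hq hn

theorem theta3_sq_add_theta4_sq (hq : |q| < 1) :
    theta3 q ^ 2 + theta4 q ^ 2 = 2 * theta3 (q ^ 2) ^ 2 := by
  have hq2 := abs_pow_lt_one hq two_ne_zero
  simp only [theta4_eq_theta3_neg, sq (theta3 _)]
  rw [theta3_mul_add_theta3_neg_mul hq hq, theta3_mul_theta3 hq2 hq2]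
  simp only [zpow_add_sq_mul_zpow_sub_sq]

theorem theta3_mul_theta4 (hq : |q| < 1) : theta3 q * theta4 q = theta4 (q ^ 2) ^ 2 := by
  have hq' : |-q| < 1 := by rwa [abs_neg]
  have hq2 : |-q ^ 2| < 1 := by simpa using abs_pow_lt_one hq two_ne_zero
  have two_mul_eq := theta3_mul_add_theta3_neg_mul hq hq'
  have term (u v : ℤ) : q ^ ((u + v) ^ 2) * (-q) ^ ((u - v) ^ 2) =
      (-q ^ 2) ^ (u ^ 2) * (-q ^ 2) ^ (v ^ 2) := by
    have sign : (-1 : ℝ) ^ (u - v) = (-1) ^ u * (-1) ^ v := by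
      rw [zpow_sub₀ (by norm_num), div_eq_mul_inv, ← inv_zpow]
      norm_num
    simp only [neg_zpow_sq]
    rw [sign]
    linear_combination (-1) ^ u * (-1) ^ v * zpow_add_sq_mul_zpow_sub_sq q u v
  simp only [term, neg_neg] at two_mul_eq
  rw [← theta3_mul_theta3 hq2 hq2] at two_mul_eq
  rw [theta4_eq_theta3_neg, theta4_eq_theta3_neg]
  linarith

lemma tendsto_pow_two_pow (hq : |q| < 1) :
    Tendsto (fun n : ℕ ↦ q ^ 2 ^ n) atTop (𝓝 0) :=
  (tendsto_pow_atTop_nhds_zero_of_abs_lt_one hq).comp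
    (tendsto_pow_atTop_atTop_of_one_lt one_lt_two)

lemma tendsto_theta3_pow_two_pow (hq : |q| < 1) :
    Tendsto (fun n : ℕ ↦ theta3 (q ^ 2 ^ n)) atTop (𝓝 1) := by
  have := (continuousAt_theta3 (q := 0) (by simp)).tendsto.comp (tendsto_pow_two_pow hq)
  rwa [theta3_zero] at this

lemma tendsto_theta4_pow_two_pow (hq : |q| < 1) :
    Tendsto (fun n : ℕ ↦ theta4 (q ^ 2 ^ n)) atTop (𝓝 1) := by
  have neg_tendsto : Tendsto (fun n : ℕ ↦ -q ^ 2 ^ n) atTop (𝓝 0) := by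
    simpa using (tendsto_pow_two_pow hq).neg
  have := (continuousAt_theta3 (q := 0) (by simp)).tendsto.comp neg_tendsto
  simp only [theta4_eq_theta3_neg]
  rwa [theta3_zero] at this

-- A zero at `q` would propagate to every `q ^ 2 ^ n`, where `theta4` tends to `1`.
lemma theta4_ne_zero (hq : |q| < 1) : theta4 q ≠ 0 := by
  intro zero
  have zero_pow (n : ℕ) : theta4 (q ^ 2 ^ n) = 0 := by
    induction n with
    | zero => simpa using zero
    | succ n ih =>
      rw [pow_succ, pow_mul, ← sq_eq_zero_iff,
        ← theta3_mul_theta4 (abs_pow_lt_one hq (pow_ne_zero n two_ne_zero)), ih, mul_zero]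
  have tendsto_one := tendsto_theta4_pow_two_pow hq
  simp only [zero_pow] at tendsto_one
  exact zero_ne_one (tendsto_nhds_unique tendsto_const_nhds tendsto_one)

lemma theta3_ne_zero (hq : |q| < 1) : theta3 q ≠ 0 := by
  simpa [theta4_eq_theta3_neg] using theta4_ne_zero (q := -q) (by rwa [abs_neg])

lemma theta3_exp (x : ℝ) : theta3 (exp x) = ∑' k : ℤ, exp (x * (k : ℝ) ^ 2) := by
  refine tsum_congr fun k ↦ ?_
  rw [← Real.rpow_intCast, ← Real.exp_mul]
  push_cast
  rfl

theorem theta3_exp_neg_pi_div {a : ℝ} (ha : 0 < a) :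
    theta3 (exp (-π / a)) = √a * theta3 (exp (-π * a)) := by
  rw [theta3_exp, theta3_exp, Real.tsum_exp_neg_mul_int_sq ha, ← Real.sqrt_eq_rpow]
  field_simp

lemma exp_neg_pi_lt_one : exp (-π) < 1 := by
  rw [exp_lt_one_iff]
  exact neg_lt_zero.2 pi_pos

theorem theta3_exp_neg_pi_sq : theta3 (exp (-π)) ^ 2 = √2 * theta4 (exp (-π)) ^ 2 := by
  set p := exp (-π / 2) with hp
  have p_sq : p ^ 2 = exp (-π) := by rw [hp, ← exp_nat_mul]; congr 1; push_cast; ring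
  have p_sq_sq : (p ^ 2) ^ 2 = exp (-π * 2) := by
    rw [p_sq, ← exp_nat_mul]; congr 1; push_cast; ring
  have hp₁ : |p| < 1 := by
    rw [abs_of_pos (exp_pos _), exp_lt_one_iff]
    linarith [pi_pos]
  have modular : theta3 p ^ 2 = 2 * theta3 ((p ^ 2) ^ 2) ^ 2 := by
    rw [p_sq_sq, theta3_exp_neg_pi_div two_pos, mul_pow, sq_sqrt zero_le_two]
  have sum_p := theta3_sq_add_theta4_sq hp₁
  have sum_q := theta3_sq_add_theta4_sq (abs_pow_lt_one hp₁ two_ne_zero)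
  have product := theta3_mul_theta4 hp₁
  rw [← p_sq, ← sq_eq_sq₀ (by positivity) (by positivity), mul_pow, sq_sqrt zero_le_two]
  have theta3_p_sq : theta3 p ^ 2 = theta3 (p ^ 2) ^ 2 + theta4 (p ^ 2) ^ 2 := by linarith
  have theta4_p_sq : theta4 p ^ 2 = theta3 (p ^ 2) ^ 2 - theta4 (p ^ 2) ^ 2 := by linarith
  have product_sq : (theta3 (p ^ 2) ^ 2 + theta4 (p ^ 2) ^ 2) *
      (theta3 (p ^ 2) ^ 2 - theta4 (p ^ 2) ^ 2) = (theta4 (p ^ 2) ^ 2) ^ 2 := by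
    rw [← theta3_p_sq, ← theta4_p_sq, ← mul_pow, product]
  linarith

end Theta

section Beta

lemma beta_eq_integral_rpow {α β : ℝ} (hα : 0 < α) (hβ : 0 < β) :
    ProbabilityTheory.beta α β = ∫ x in (0 : ℝ)..1, x ^ (α - 1) * (1 - x) ^ (β - 1) := by
  rw [ProbabilityTheory.beta_eq_betaIntegralReal α β hα hβ, Complex.betaIntegral,
    ← Complex.ofReal_re (∫ x in (0 : ℝ)..1, _), ← intervalIntegral.integral_ofReal]
  congr 1
  refine intervalIntegral.integral_congr_Ioo_of_le zero_le_one fun x hx ↦ ?_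
  rw [Complex.ofReal_mul, Complex.ofReal_cpow hx.1.le, Complex.ofReal_cpow (sub_nonneg.2 hx.2.le)]
  push_cast
  rfl

lemma integral_rpow_mul_one_sub_rpow_rpow {α β p : ℝ} (hα : 0 < α) (hβ : 0 < β) (hp : 0 < p) :
    ∫ x in (0 : ℝ)..1, x ^ (p * α - 1) * (1 - x ^ p) ^ (β - 1) =
      ProbabilityTheory.beta α β / p := by
  have pos {x : ℝ} (hx : x ∈ Ioo (min 0 1) (max 0 1)) : 0 < x := by simpa using hx.1
  have substitution := intervalIntegral.integral_comp_mul_deriv_of_deriv_nonneg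
    (a := 0) (b := 1) (f := fun x ↦ x ^ p) (f' := fun x ↦ p * x ^ (p - 1))
    (g := fun x ↦ x ^ (α - 1) * (1 - x) ^ (β - 1))
    (continuous_rpow_const hp.le).continuousOn
    (fun x hx ↦ hasDerivAt_rpow_const (.inl (pos hx).ne'))
    (fun x hx ↦ mul_nonneg hp.le (rpow_nonneg (pos hx).le _))
  rw [zero_rpow hp.ne', one_rpow, ← beta_eq_integral_rpow hα hβ] at substitution
  rw [← substitution, ← intervalIntegral.integral_div]
  refine intervalIntegral.integral_congr_Ioo_of_le zero_le_one fun x hx ↦ ?_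
  have power : x ^ (p * α - 1) = (x ^ p) ^ (α - 1) * x ^ (p - 1) := by
    rw [← rpow_mul hx.1.le, ← rpow_add hx.1]
    ring_nf
  simp only [Function.comp_apply]
  rw [power]
  field_simp

end Beta

section EllipticK

/-- The complete elliptic integral of the first kind in Legendre's form, as a function of the
parameter `m = k²` rather than of the modulus `k`. -/
noncomputable def ellipticK (m : ℝ) : ℝ :=
  ∫ φ in (0 : ℝ)..(π / 2), 1 / √(1 - m * sin φ ^ 2)

lemma ellipticK_zero : ellipticK 0 = π / 2 := by
  simp [ellipticK]

lemma cos_pos_of_mem_Ioo_zero_pi_div_two {φ : ℝ} (hφ : φ ∈ Ioo 0 (π / 2)) : 0 < cos φ :=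
  cos_pos_of_mem_Ioo ⟨by linarith [hφ.1, pi_pos], hφ.2⟩

lemma ellipticK_eq_integral_algebraic (m : ℝ) :
    ellipticK m = ∫ x in (0 : ℝ)..1, 1 / √((1 - x ^ 2) * (1 - m * x ^ 2)) := by
  have cos_pos (φ : ℝ) (hφ : φ ∈ Ioo (min 0 (π / 2)) (max 0 (π / 2))) : 0 < cos φ := by
    rw [min_eq_left pi_div_two_pos.le, max_eq_right pi_div_two_pos.le] at hφ
    exact cos_pos_of_mem_Ioo_zero_pi_div_two hφ
  have substitution := intervalIntegral.integral_comp_mul_deriv_of_deriv_nonneg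
    (g := fun x ↦ 1 / √((1 - x ^ 2) * (1 - m * x ^ 2))) continuous_sin.continuousOn
    (fun φ _ ↦ hasDerivAt_sin φ) fun φ hφ ↦ (cos_pos φ hφ).le
  rw [sin_zero, sin_pi_div_two] at substitution
  rw [← substitution, ellipticK]
  refine intervalIntegral.integral_congr_Ioo_of_le pi_div_two_pos.le fun φ hφ ↦ ?_
  have cos_pos := cos_pos_of_mem_Ioo_zero_pi_div_two hφ
  simp only [Function.comp_apply]
  rw [← cos_sq', sqrt_mul (sq_nonneg _), sqrt_sq cos_pos.le]
  field_simp

theorem ellipticK_neg_one : ellipticK (-1) = ProbabilityTheory.beta (1 / 4) (1 / 2) / 4 := by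
  rw [ellipticK_eq_integral_algebraic, ← integral_rpow_mul_one_sub_rpow_rpow (by norm_num)
    (by norm_num) four_pos]
  refine intervalIntegral.integral_congr_Ioo_of_le zero_le_one fun x hx ↦ ?_
  have one_sub_pos : 0 < 1 - x ^ 4 := sub_pos.2 (pow_lt_one₀ hx.1.le hx.2 four_ne_zero)
  rw [show (4 * (1 / 4) - 1 : ℝ) = 0 by norm_num, rpow_zero, one_mul,
    show (1 / 2 - 1 : ℝ) = -(1 / 2) by norm_num, rpow_ofNat, rpow_neg one_sub_pos.le,
    ← sqrt_eq_rpow, one_div]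
  ring_nf

lemma hasSum_ascPochhammer_mul_pow (a : ℝ) {x : ℝ} (hx : |x| < 1) :
    HasSum (fun n : ℕ ↦ (ascPochhammer ℝ n).eval a / n.factorial * x ^ n)
      (1 / (1 - x) ^ a) := by
  have coeff (n : ℕ) : (ascPochhammer ℝ n).eval a / n.factorial = Ring.choose (a + n - 1) n := by
    rw [← Polynomial.ascPochhammer_smeval_eq_eval,
      ← Ring.factorial_nsmul_multichoose_eq_ascPochhammer, Ring.multichoose_eq, nsmul_eq_mul,
      mul_div_cancel_left₀ _ (by positivity)]
  have hasSum := (one_div_one_sub_rpow_hasFPowerSeriesOnBall_zero a).hasSum (y := x)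
    (by simpa [enorm_eq_nnnorm, ← NNReal.coe_lt_coe] using hx)
  simpa [FormalMultilinearSeries.ofScalars, coeff] using hasSum

lemma ascPochhammer_half_div_factorial_eq_prod (n : ℕ) :
    (ascPochhammer ℝ n).eval (1 / 2) / n.factorial =
      ∏ i ∈ Finset.range n, (2 * (i : ℝ) + 1) / (2 * i + 2) := by
  induction n with
  | zero => simp
  | succ n ih =>
    rw [Finset.prod_range_succ, ← ih, ascPochhammer_succ_eval, Nat.factorial_succ]
    push_cast
    field_simp
    ring

lemma integral_zero_pi_div_two_sin_pow_even (n : ℕ) :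
    ∫ φ in (0 : ℝ)..(π / 2), sin φ ^ (2 * n) =
      π / 2 * ((ascPochhammer ℝ n).eval (1 / 2) / n.factorial) := by
  have reflect := intervalIntegral.integral_comp_sub_left (a := 0) (b := π / 2)
    (fun φ ↦ sin φ ^ (2 * n)) (π / 2)
  simp only [sin_pi_div_two_sub, sub_self, sub_zero] at reflect
  rw [← reflect, EulerSine.integral_cos_pow_eq, integral_sin_pow_even,
    ascPochhammer_half_div_factorial_eq_prod]
  ring

theorem ellipticK_eq_hyp2F1 {m : ℝ} (hm : |m| < 1) :
    ellipticK m = π / 2 * hyp2F1 (1 / 2) (1 / 2) 1 m := by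
  set c : ℕ → ℝ := fun n ↦ (ascPochhammer ℝ n).eval (1 / 2) / n.factorial with hc
  have c_pos (n : ℕ) : 0 < c n := div_pos (ascPochhammer_pos n _ (by norm_num)) (by positivity)
  have abs_le (φ : ℝ) : |m * sin φ ^ 2| ≤ |m| := by
    rw [abs_mul, abs_of_nonneg (sq_nonneg (sin φ))]
    exact mul_le_of_le_one_right (abs_nonneg m) (sin_sq_le_one φ)
  have integrand_hasSum (φ : ℝ) :
      HasSum (fun n ↦ c n * (m * sin φ ^ 2) ^ n) (1 / √(1 - m * sin φ ^ 2)) := by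
    rw [sqrt_eq_rpow]
    exact hasSum_ascPochhammer_mul_pow (1 / 2) ((abs_le φ).trans_lt hm)
  have integral_hasSum : HasSum
      (fun n ↦ ∫ φ in (0 : ℝ)..(π / 2), c n * (m * sin φ ^ 2) ^ n) (ellipticK m) := by
    refine intervalIntegral.hasSum_integral_of_dominated_convergence (fun n _ ↦ c n * |m| ^ n)
      (fun n ↦ Continuous.aestronglyMeasurable (by fun_prop))
      (fun n ↦ .of_forall fun φ _ ↦ ?_) (.of_forall fun _ _ ↦ ?_) intervalIntegrable_const
      (.of_forall fun φ _ ↦ integrand_hasSum φ)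
    · rw [norm_mul, norm_pow, norm_of_nonneg (c_pos n).le]
      exact mul_le_mul_of_nonneg_left (pow_le_pow_left₀ (norm_nonneg _) (abs_le φ) n) (c_pos n).le
    · exact (hasSum_ascPochhammer_mul_pow (1 / 2) (by rwa [abs_abs])).summable
  rw [← integral_hasSum.tsum_eq, hyp2F1, ← tsum_mul_left]
  refine tsum_congr fun n ↦ ?_
  simp only [mul_pow, ← pow_mul, intervalIntegral.integral_const_mul,
    integral_zero_pi_div_two_sin_pow_even, ascPochhammer_eval_one, hc]
  field_simp

end EllipticK

section GaussIntegral

variable {E : Type*} [NormedAddCommGroup E] [NormedSpace ℝ E]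

/-- Gauss's elliptic integral `∫ dt / √((t² + a²)(t² + b²))` over the real line, equal to `π`
divided by the arithmetic-geometric mean of `a` and `b` when these are positive. -/
noncomputable def gaussIntegral (a b : ℝ) : ℝ :=
  ∫ t : ℝ, 1 / √((t ^ 2 + a ^ 2) * (t ^ 2 + b ^ 2))

lemma gaussIntegral_comm (a b : ℝ) : gaussIntegral a b = gaussIntegral b a := by
  simp only [gaussIntegral, mul_comm]

lemma gaussIntegral_eq_two_mul_integral_Ioi (a b : ℝ) :
    gaussIntegral a b = 2 * ∫ t in Ioi (0 : ℝ), 1 / √((t ^ 2 + a ^ 2) * (t ^ 2 + b ^ 2)) := by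
  rw [← integral_comp_abs (f := fun t ↦ 1 / √((t ^ 2 + a ^ 2) * (t ^ 2 + b ^ 2)))]
  simp only [sq_abs, gaussIntegral]

lemma integral_Ioi_eq_integral_comp_mul_tan (f : ℝ → E) {b : ℝ} (hb : 0 < b) :
    ∫ t in Ioi (0 : ℝ), f t =
      ∫ φ in Ioo 0 (π / 2), (b * (1 / cos φ ^ 2)) • f (b * tan φ) := by
  have image : (fun φ ↦ b * tan φ) '' Ioo 0 (π / 2) = Ioi 0 := by
    refine Subset.antisymm ?_ fun t (ht : 0 < t) ↦ ?_
    · rintro _ ⟨φ, hφ, rfl⟩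
      exact mul_pos hb (tan_pos_of_pos_of_lt_pi_div_two hφ.1 hφ.2)
    · refine ⟨arctan (t / b), ⟨arctan_pos.2 (div_pos ht hb), arctan_lt_pi_div_two _⟩, ?_⟩
      simp only [tan_arctan]
      field_simp
  have subset : Ioo 0 (π / 2) ⊆ Ioo (-(π / 2)) (π / 2) :=
    Ioo_subset_Ioo_left (neg_nonpos.2 pi_div_two_pos.le)
  have monotone : MonotoneOn (fun φ ↦ b * tan φ) (Ioo 0 (π / 2)) :=
    fun _ hφ _ hψ h ↦ mul_le_mul_of_nonneg_left
      (strictMonoOn_tan.monotoneOn (subset hφ) (subset hψ) h) hb.le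
  rw [← image, integral_image_eq_integral_deriv_smul_of_monotoneOn measurableSet_Ioo
    (fun φ hφ ↦ ((hasDerivAt_tan (cos_pos_of_mem_Ioo_zero_pi_div_two hφ).ne').const_mul
      b).hasDerivWithinAt) monotone]

theorem gaussIntegral_eq_ellipticK {a b : ℝ} (ha : 0 < a) (hb : 0 < b) :
    gaussIntegral a b = 2 / a * ellipticK (1 - b ^ 2 / a ^ 2) := by
  rw [gaussIntegral_eq_two_mul_integral_Ioi, integral_Ioi_eq_integral_comp_mul_tan _ hb, ellipticK,
    intervalIntegral.integral_of_le pi_div_two_pos.le, integral_Ioc_eq_integral_Ioo,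
    div_mul_eq_mul_div, mul_div_assoc, ← integral_div]
  congr 1
  refine setIntegral_congr_fun measurableSet_Ioo fun φ hφ ↦ ?_
  have cos_pos := cos_pos_of_mem_Ioo_zero_pi_div_two hφ
  have radicand : ((b * tan φ) ^ 2 + a ^ 2) * ((b * tan φ) ^ 2 + b ^ 2) =
      (a * b / cos φ ^ 2) ^ 2 * (1 - (1 - b ^ 2 / a ^ 2) * sin φ ^ 2) := by
    rw [tan_eq_sin_div_cos]
    field_simp
    rw [sin_sq]
    ring
  simp only [smul_eq_mul]
  rw [radicand, sqrt_mul (sq_nonneg _), sqrt_sq (by positivity)]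
  field_simp

lemma gaussIntegral_self {a : ℝ} (ha : 0 < a) : gaussIntegral a a = π / a := by
  rw [gaussIntegral_eq_ellipticK ha ha, div_self (by positivity), sub_self, ellipticK_zero]
  field_simp

theorem ellipticK_eq_ellipticK_div_sub_one {m : ℝ} (hm : m < 1) :
    ellipticK m = ellipticK (m / (m - 1)) / √(1 - m) := by
  have one_sub_pos : 0 < 1 - m := sub_pos.2 hm
  have comm := gaussIntegral_comm 1 √(1 - m)
  rw [gaussIntegral_eq_ellipticK one_pos (by positivity),
    gaussIntegral_eq_ellipticK (by positivity) one_pos, sq_sqrt one_sub_pos.le] at comm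
  have parameter : 1 - 1 ^ 2 / (1 - m) = m / (m - 1) := by
    have : m - 1 ≠ 0 := by linarith
    field_simp
    ring
  rw [parameter, one_pow, div_one, div_one, sub_sub_cancel] at comm
  linear_combination comm / 2

lemma integral_eq_integral_Ioi_comp_sub_div {c : ℝ} (hc : 0 < c) (f : ℝ → E) :
    ∫ u, f u = ∫ t in Ioi (0 : ℝ), ((1 + c / t ^ 2) / 2) • f ((t - c / t) / 2) := by
  have image : (fun t ↦ (t - c / t) / 2) '' Ioi 0 = univ := by
    refine eq_univ_of_forall fun u ↦ ?_
    have abs_lt : |u| < √(u ^ 2 + c) := by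
      rw [← sqrt_sq_eq_abs]
      exact sqrt_lt_sqrt (sq_nonneg u) (by linarith)
    have pos : 0 < u + √(u ^ 2 + c) := by linarith [neg_abs_le u]
    refine ⟨u + √(u ^ 2 + c), pos, ?_⟩
    simp only
    field_simp
    linear_combination sq_sqrt (by positivity : 0 ≤ u ^ 2 + c)
  have hasDerivAt (t : ℝ) (ht : t ∈ Ioi 0) :
      HasDerivAt (fun t ↦ (t - c / t) / 2) ((1 + c / t ^ 2) / 2) t := by
    have := ((hasDerivAt_id t).sub ((hasDerivAt_inv (ne_of_gt ht)).const_mul c)).div_const 2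
    convert! this using 1
    ring
  have monotone : MonotoneOn (fun t ↦ (t - c / t) / 2) (Ioi 0) := by
    intro s (hs : 0 < s) t _ hst
    simp only
    gcongr
  rw [← setIntegral_univ, ← image, integral_image_eq_integral_deriv_smul_of_monotoneOn
    measurableSet_Ioi (fun t ht ↦ (hasDerivAt t ht).hasDerivWithinAt) monotone]

theorem gaussIntegral_arith_mean_geom_mean {a b : ℝ} (ha : 0 < a) (hb : 0 < b) :
    gaussIntegral ((a + b) / 2) √(a * b) = gaussIntegral a b := by
  rw [gaussIntegral_eq_two_mul_integral_Ioi a b, gaussIntegral,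
    integral_eq_integral_Ioi_comp_sub_div (mul_pos ha hb), ← integral_const_mul]
  refine setIntegral_congr_fun measurableSet_Ioi fun t (ht : 0 < t) ↦ ?_
  have arithmetic : ((t - a * b / t) / 2) ^ 2 + ((a + b) / 2) ^ 2 =
      (t ^ 2 + a ^ 2) * (t ^ 2 + b ^ 2) / (2 * t) ^ 2 := by
    field_simp
    ring
  have geometric : ((t - a * b / t) / 2) ^ 2 + √(a * b) ^ 2 =
      ((t ^ 2 + a * b) / (2 * t)) ^ 2 := by
    rw [sq_sqrt (mul_pos ha hb).le]
    field_simp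
    ring
  simp only [smul_eq_mul]
  rw [arithmetic, geometric, sqrt_mul (by positivity), sqrt_div (by positivity),
    sqrt_sq (by positivity), sqrt_sq (by positivity)]
  field_simp

lemma continuousAt_gaussIntegral {a b : ℝ} (ha : 0 < a) (hb : 0 < b) :
    ContinuousAt (fun p : ℝ × ℝ ↦ gaussIntegral p.1 p.2) (a, b) := by
  obtain ⟨c, hc, hcab⟩ := exists_between (lt_min ha hb)
  obtain ⟨hca, hcb⟩ := lt_min_iff.1 hcab
  refine continuousAt_of_dominated (bound := fun t ↦ (c ^ 2)⁻¹ * (1 + (t / c) ^ 2)⁻¹)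
    (.of_forall fun p ↦ Measurable.aestronglyMeasurable (by fun_prop)) ?_
    ((integrable_inv_one_add_sq.comp_div hc.ne').const_mul _) (.of_forall fun t ↦ ?_)
  · filter_upwards [continuous_fst.continuousAt.eventually (lt_mem_nhds hca),
      continuous_snd.continuousAt.eventually (lt_mem_nhds hcb)] with p hp₁ hp₂
    refine .of_forall fun t ↦ ?_
    have le_sqrt : t ^ 2 + c ^ 2 ≤ √((t ^ 2 + p.1 ^ 2) * (t ^ 2 + p.2 ^ 2)) := by
      refine le_sqrt_of_sq_le ?_
      rw [sq (t ^ 2 + c ^ 2)]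
      gcongr
    calc ‖1 / √((t ^ 2 + p.1 ^ 2) * (t ^ 2 + p.2 ^ 2))‖
        = 1 / √((t ^ 2 + p.1 ^ 2) * (t ^ 2 + p.2 ^ 2)) := norm_of_nonneg (by positivity)
      _ ≤ 1 / (t ^ 2 + c ^ 2) := by gcongr
      _ = (c ^ 2)⁻¹ * (1 + (t / c) ^ 2)⁻¹ := by field_simp; ring
  · refine ContinuousAt.div (by fun_prop) (by fun_prop) ?_
    positivity

end GaussIntegral

section Connection

variable {q : ℝ}

lemma gaussIntegral_theta_pow_two_pow (hq : |q| < 1) (n : ℕ) :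
    gaussIntegral (theta3 (q ^ 2 ^ n) ^ 2) (theta4 (q ^ 2 ^ n) ^ 2) =
      gaussIntegral (theta3 q ^ 2) (theta4 q ^ 2) := by
  induction n with
  | zero => simp
  | succ n ih =>
    have succ_eq : q ^ 2 ^ (n + 1) = (q ^ 2 ^ n) ^ 2 := by rw [← pow_mul, ← pow_succ]
    have hqn := abs_pow_lt_one hq (pow_ne_zero n two_ne_zero)
    have arithmetic : theta3 ((q ^ 2 ^ n) ^ 2) ^ 2 =
        (theta3 (q ^ 2 ^ n) ^ 2 + theta4 (q ^ 2 ^ n) ^ 2) / 2 := by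
      rw [theta3_sq_add_theta4_sq hqn]
      ring
    have geometric : theta4 ((q ^ 2 ^ n) ^ 2) ^ 2 =
        √(theta3 (q ^ 2 ^ n) ^ 2 * theta4 (q ^ 2 ^ n) ^ 2) := by
      rw [← mul_pow, theta3_mul_theta4 hqn, sqrt_sq (sq_nonneg _)]
    rw [succ_eq, arithmetic, geometric, gaussIntegral_arith_mean_geom_mean
      (sq_pos_of_ne_zero (theta3_ne_zero hqn)) (sq_pos_of_ne_zero (theta4_ne_zero hqn)), ih]

theorem gaussIntegral_theta (hq : |q| < 1) :
    gaussIntegral (theta3 q ^ 2) (theta4 q ^ 2) = π := by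
  have thetas := ((tendsto_theta3_pow_two_pow hq).pow 2).prodMk_nhds
    ((tendsto_theta4_pow_two_pow hq).pow 2)
  simp only [one_pow] at thetas
  have gauss := (continuousAt_gaussIntegral one_pos one_pos).tendsto.comp thetas
  simp only [Function.comp_def, gaussIntegral_theta_pow_two_pow hq, gaussIntegral_self one_pos,
    div_one] at gauss
  exact tendsto_nhds_unique tendsto_const_nhds gauss

theorem hyp2F1_eq_theta3_sq (hq₀ : 0 ≤ q) (hq₁ : q < 1) :
    hyp2F1 (1 / 2) (1 / 2) 1 (1 - theta4 q ^ 4 / theta3 q ^ 4) = theta3 q ^ 2 := by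
  have hq : |q| < 1 := by rwa [abs_of_nonneg hq₀]
  have theta3_pos : 0 < theta3 q := one_pos.trans_le (one_le_theta3 hq₀ hq₁)
  have theta4_pos : 0 < theta4 q ^ 4 := by
    have := theta4_ne_zero hq
    positivity
  have theta4_pow_le : theta4 q ^ 4 ≤ theta3 q ^ 4 := by
    rw [← Even.pow_abs (by decide : Even 4)]
    gcongr
    exact abs_theta4_le_theta3 hq₀ hq₁
  have parameter_lt : |1 - theta4 q ^ 4 / theta3 q ^ 4| < 1 := by
    rw [abs_of_nonneg (sub_nonneg.2 (div_le_one_of_le₀ theta4_pow_le (by positivity)))]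
    linarith [div_pos theta4_pos (pow_pos theta3_pos 4)]
  have gauss := gaussIntegral_theta hq
  rw [gaussIntegral_eq_ellipticK (by positivity) (by have := theta4_ne_zero hq; positivity),
    ← pow_mul, ← pow_mul, ellipticK_eq_hyp2F1 parameter_lt] at gauss
  rw [div_mul_eq_mul_div, div_eq_iff (by positivity)] at gauss
  exact mul_left_cancel₀ pi_ne_zero (by linear_combination gauss)

end Connection

section SpecialValue

theorem hyp2F1_half_eq_theta4_sq :
    hyp2F1 (1 / 2) (1 / 2) 1 (1 / 2) = √2 * theta4 (exp (-π)) ^ 2 := by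
  have theta4_ne_zero : theta4 (exp (-π)) ≠ 0 :=
    theta4_ne_zero (by rw [abs_of_pos (exp_pos _)]; exact exp_neg_pi_lt_one)
  have parameter : 1 - theta4 (exp (-π)) ^ 4 / theta3 (exp (-π)) ^ 4 = 1 / 2 := by
    rw [show theta3 (exp (-π)) ^ 4 = (theta3 (exp (-π)) ^ 2) ^ 2 by ring, theta3_exp_neg_pi_sq,
      mul_pow, sq_sqrt zero_le_two]
    field_simp
    norm_num
  have jacobi := hyp2F1_eq_theta3_sq (exp_pos (-π)).le exp_neg_pi_lt_one
  rwa [parameter, theta3_exp_neg_pi_sq] at jacobi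

lemma Gamma_one_quarter_mul_Gamma_three_quarters :
    Gamma (1 / 4) * Gamma (3 / 4) = √2 * π := by
  have reflection := Gamma_mul_Gamma_one_sub (1 / 4)
  rw [show (1 - 1 / 4 : ℝ) = 3 / 4 by norm_num, show π * (1 / 4) = π / 4 by ring,
    sin_pi_div_four] at reflection
  rw [reflection, div_div_eq_mul_div, div_eq_iff (by positivity)]
  linear_combination -π * sq_sqrt zero_le_two

lemma ellipticK_one_half : ellipticK (1 / 2) = √2 * ProbabilityTheory.beta (1 / 4) (1 / 2) / 4 := by
  rw [ellipticK_eq_ellipticK_div_sub_one (by norm_num),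
    show (1 / 2 / (1 / 2 - 1) : ℝ) = -1 by norm_num, ellipticK_neg_one,
    show (1 - 1 / 2 : ℝ) = 2⁻¹ by norm_num, sqrt_inv]
  field_simp

theorem sqrt_two_mul_hyp2F1_half :
    √2 * hyp2F1 (1 / 2) (1 / 2) 1 (1 / 2) = Gamma (1 / 4) / (Gamma (1 / 2) * Gamma (3 / 4)) := by
  have series := ellipticK_eq_hyp2F1 (m := 1 / 2) (by norm_num [abs_of_pos])
  rw [ellipticK_one_half, ProbabilityTheory.beta, show (1 / 4 + 1 / 2 : ℝ) = 3 / 4 by norm_num,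
    ← sq_sqrt pi_pos.le, ← Gamma_one_half_eq] at series
  have : 0 < Gamma (1 / 2) := Gamma_pos_of_pos (by norm_num)
  have : 0 < Gamma (3 / 4) := Gamma_pos_of_pos (by norm_num)
  field_simp at series ⊢
  linear_combination -√2 / 4 * series + Gamma (1 / 4) / 2 * sq_sqrt zero_le_two

end SpecialValue

end

theorem hyp2F1_half_eval :
    hyp2F1 (1/2) (1/2) 1 (1/2) =
        Real.sqrt Real.pi * Real.Gamma 1 / Real.Gamma (3/4) ^ 2 ∧
    hyp2F1 (1/2) (1/2) 1 (1/2) =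
        Real.Gamma (1/4) / (Real.sqrt 2 * (Real.Gamma (1/2) * Real.Gamma (3/4))) ∧
    Real.sqrt 2 * hyp2F1 (1/2) (1/2) 1 (1/2) =
        Real.Gamma (1/4) / (Real.Gamma (1/2) * Real.Gamma (3/4)) ∧
    Real.sqrt 2 * hyp2F1 (1/2) (1/2) 1 (1/2) = 2 * theta4 (Real.exp (-Real.pi)) ^ 2 := by
  have hgamma := sqrt_two_mul_hyp2F1_half
  have htheta := hyp2F1_half_eq_theta4_sq
  have hreflection := Gamma_one_quarter_mul_Gamma_three_quarters
  have : 0 < Real.Gamma (3 / 4) := Real.Gamma_pos_of_pos (by norm_num)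
  have hdiv : hyp2F1 (1 / 2) (1 / 2) 1 (1 / 2) =
      Real.Gamma (1 / 4) / (√2 * (Real.Gamma (1 / 2) * Real.Gamma (3 / 4))) := by
    rw [mul_comm √2, ← div_div, ← hgamma]
    field_simp
  refine ⟨?_, hdiv, hgamma, ?_⟩
  · calc hyp2F1 (1 / 2) (1 / 2) 1 (1 / 2)
        = Real.Gamma (1 / 4) * Real.Gamma (3 / 4) / (√2 * √Real.pi * Real.Gamma (3 / 4) ^ 2) := by
          rw [hdiv, Real.Gamma_one_half_eq]
          field_simp
      _ = √Real.pi * Real.Gamma 1 / Real.Gamma (3 / 4) ^ 2 := by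
          rw [hreflection, Real.Gamma_one]
          field_simp
          rw [Real.sq_sqrt Real.pi_pos.le]
  · rw [htheta, ← mul_assoc, Real.mul_self_sqrt zero_le_two]
end

section
/- Extremality of the minimal temperature for rectangular tori: for all α > 0 and t > 0, θ₄(e^{-πtα²}) · θ₄(e^{-πtα^{-2}}) ≤ θ₄(e^{-πt})², with equality if and only if α = 1. -/
/-!
Jacobi's triple product factors `θ₄(q)` as `∏ (1 - q^{2n}) (1 - q^{2n-1})²`, so with `q = e^{-x}`
and `x = e^s` its logarithm is a sum of terms `log (1 - e^{-λ e^s})`. Each is a translate of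
`s ↦ log (1 - e^{-e^s})`, whose derivative `x / (e^x - 1)` decreases in `x = e^s`. Hence
`s ↦ log θ₄(e^{-e^s})` is strictly concave, and the two nomes in the theorem sit symmetrically about
`s = log (πt)`, at `log (πt) ± 2 log α`.

The triple product is the limit of a finite identity: the coefficient of `z^k` in
`∏_{j<n} (1 + z q^{2j+1}) (1 + z⁻¹ q^{2j+1})` is `q^{k²}` times the Gaussian binomial coefficient
`[2n choose n+k]` in base `q²`, which tends to `1 / (q²; q²)_∞` boundedly as `n → ∞`.
-/

section QPochhammer

open Filter Topology

/-- The `q`-Pochhammer symbol `(a; q)_n`. -/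
def qPochhammer {R : Type*} [CommRing R] (a q : R) (n : ℕ) : R :=
  ∏ j ∈ Finset.range n, (1 - a * q ^ j)

/-- The infinite `q`-Pochhammer symbol `(a; q)_∞`, meaningful for `‖q‖ < 1`. -/
noncomputable def qPochhammerInf {R : Type*} [CommRing R] [TopologicalSpace R] (a q : R) : R :=
  ∏' j : ℕ, (1 - a * q ^ j)

lemma qPochhammer_succ {R : Type*} [CommRing R] (a q : R) (n : ℕ) :
    qPochhammer a q (n + 1) = qPochhammer a q n * (1 - a * q ^ n) :=
  Finset.prod_range_succ _ _

lemma summable_norm_mul_pow {R : Type*} [NormedRing R] (a : R) {q : R} (hq : ‖q‖ < 1) :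
    Summable fun j : ℕ => ‖a * q ^ j‖ :=
  .of_nonneg_of_le (fun _ => norm_nonneg _) (fun _ => norm_mul_le _ _)
    ((summable_norm_geometric_of_norm_lt_one hq).mul_left ‖a‖)

lemma tendsto_qPochhammer {R : Type*} [NormedCommRing R] [NormOneClass R] [CompleteSpace R]
    (a : R) {q : R} (hq : ‖q‖ < 1) :
    Tendsto (fun n => qPochhammer a q n) atTop (𝓝 (qPochhammerInf a q)) := by
  have hs : Summable fun j : ℕ => ‖-(a * q ^ j)‖ := by
    simpa only [norm_neg] using summable_norm_mul_pow a hq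
  simpa only [← sub_eq_add_neg, qPochhammer, qPochhammerInf] using
    (multipliable_one_add_of_summable hs).hasProd.tendsto_prod_nat

lemma qPochhammerInf_ne_zero {𝕜 : Type*} [NormedField 𝕜] [CompleteSpace 𝕜] {a q : 𝕜}
    (hq : ‖q‖ < 1) (ha : ∀ j : ℕ, a * q ^ j ≠ 1) : qPochhammerInf a q ≠ 0 := by
  have hs : Summable fun j : ℕ => ‖-(a * q ^ j)‖ := by
    simpa only [norm_neg] using summable_norm_mul_pow a hq
  simpa only [qPochhammerInf, ← sub_eq_add_neg] using tprod_one_add_ne_zero_of_summable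
    (fun j => by simpa only [← sub_eq_add_neg, sub_ne_zero] using (ha j).symm) hs

end QPochhammer

section CentralQBinom

variable {𝕜 : Type*} [Field 𝕜]

/-- The reciprocal `1 / (q; q)_m` of the `q`-factorial, taken to vanish for `m < 0`. -/
def recipQFactorial (q : 𝕜) : ℤ → 𝕜
  | .ofNat m => (qPochhammer q q m)⁻¹
  | .negSucc _ => 0

/-- The Gaussian binomial coefficient `[2n choose n + k]` in base `q`, for `k : ℤ`. -/
def centralQBinom (q : 𝕜) (n : ℕ) (k : ℤ) : 𝕜 :=
  qPochhammer q q (2 * n) * (recipQFactorial q (n + k) * recipQFactorial q (n - k))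

lemma recipQFactorial_natCast (q : 𝕜) (m : ℕ) :
    recipQFactorial q m = (qPochhammer q q m)⁻¹ := rfl

lemma recipQFactorial_of_neg (q : 𝕜) {m : ℤ} (hm : m < 0) : recipQFactorial q m = 0 := by
  obtain ⟨k, rfl⟩ := Int.eq_negSucc_of_lt_zero hm
  rfl

lemma recipQFactorial_sub_one {q : 𝕜} (hq : ∀ n : ℕ, q ^ (n + 1) ≠ 1) (m : ℤ) :
    recipQFactorial q (m - 1) = recipQFactorial q m * (1 - q ^ m) := by
  rcases lt_trichotomy m 0 with hm | rfl | hm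
  · rw [recipQFactorial_of_neg q hm, recipQFactorial_of_neg q (by omega), zero_mul]
  · simp [recipQFactorial_of_neg]
  · obtain ⟨n, rfl⟩ : ∃ n : ℕ, m = (n + 1 : ℕ) := ⟨m.toNat - 1, by omega⟩
    have hn : 1 - q * q ^ n ≠ 0 := by simpa [sub_ne_zero, pow_succ'] using (hq n).symm
    rw [show ((n + 1 : ℕ) : ℤ) - 1 = n by omega, recipQFactorial_natCast, recipQFactorial_natCast,
      zpow_natCast, qPochhammer_succ, pow_succ', mul_inv_rev, mul_right_comm, inv_mul_cancel₀ hn,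
      one_mul]

lemma centralQBinom_zero (q : 𝕜) (k : ℤ) : centralQBinom q 0 k = if k = 0 then 1 else 0 := by
  rcases lt_trichotomy k 0 with hk | rfl | hk
  · simp [centralQBinom, recipQFactorial_of_neg q hk, hk.ne]
  · simp [centralQBinom, qPochhammer, recipQFactorial]
  · simp [centralQBinom, recipQFactorial_of_neg q (neg_neg_of_pos hk), hk.ne']

lemma centralQBinom_succ {q : 𝕜} (hq₀ : q ≠ 0) (hq : ∀ n : ℕ, q ^ (n + 1) ≠ 1) (n : ℕ) (k : ℤ) :
    centralQBinom q (n + 1) k = (1 + q ^ (2 * n + 1)) * centralQBinom q n k +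
      q ^ (n + 1 - k) * centralQBinom q n (k - 1) +
      q ^ (n + 1 + k) * centralQBinom q n (k + 1) := by
  have hplus : recipQFactorial q (n + k) =
      recipQFactorial q (n + 1 + k) * (1 - q ^ (n + 1 + k : ℤ)) := by
    rw [← recipQFactorial_sub_one hq]; congr 1; ring
  have hminus : recipQFactorial q (n - k) =
      recipQFactorial q (n + 1 - k) * (1 - q ^ (n + 1 - k : ℤ)) := by
    rw [← recipQFactorial_sub_one hq]; congr 1; ring
  have hplus' : recipQFactorial q (n + (k - 1)) =
      recipQFactorial q (n + k) * (1 - q ^ (n + k : ℤ)) := by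
    rw [← recipQFactorial_sub_one hq]; congr 1; ring
  have hminus' : recipQFactorial q (n - (k + 1)) =
      recipQFactorial q (n - k) * (1 - q ^ (n - k : ℤ)) := by
    rw [← recipQFactorial_sub_one hq]; congr 1; ring
  have hpoch : qPochhammer q q (2 * (n + 1)) =
      qPochhammer q q (2 * n) * (1 - q ^ (2 * n + 1)) * (1 - q ^ (2 * n + 2)) := by
    rw [show 2 * (n + 1) = 2 * n + 1 + 1 by ring, qPochhammer_succ, qPochhammer_succ]
    ring
  simp only [centralQBinom, hpoch, hplus', hminus', hplus, hminus, Nat.cast_succ,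
    show (n : ℤ) - (k - 1) = n + 1 - k by ring, show (n : ℤ) + (k + 1) = n + 1 + k by ring,
    zpow_add₀ hq₀, zpow_sub₀ hq₀, zpow_one, zpow_natCast]
  field_simp [zpow_ne_zero k hq₀]
  ring

end CentralQBinom

section TripleProduct

open Filter Topology

lemma zpow_sq_mul_centralQBinom_succ {𝕜 : Type*} [Field 𝕜] {q z : 𝕜} (hq₀ : q ≠ 0)
    (hq : ∀ n : ℕ, (q ^ 2) ^ (n + 1) ≠ 1) (hz : z ≠ 0) (n : ℕ) (k : ℤ) :
    q ^ (k ^ 2) * z ^ k * centralQBinom (q ^ 2) (n + 1) k =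
      (1 + q ^ (4 * n + 2)) * (q ^ (k ^ 2) * z ^ k * centralQBinom (q ^ 2) n k) +
      z * q ^ (2 * n + 1) *
        (q ^ ((k - 1) ^ 2) * z ^ (k - 1) * centralQBinom (q ^ 2) n (k - 1)) +
      z⁻¹ * q ^ (2 * n + 1) *
        (q ^ ((k + 1) ^ 2) * z ^ (k + 1) * centralQBinom (q ^ 2) n (k + 1)) := by
  have hq_sub : q ^ (2 * n + 1) * q ^ ((k - 1) ^ 2) =
      q ^ (k ^ 2) * (q ^ 2) ^ (n + 1 - k : ℤ) := by
    simp only [← zpow_natCast, ← zpow_mul, ← zpow_add₀ hq₀]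
    congr 1
    push_cast
    ring
  have hq_add : q ^ (2 * n + 1) * q ^ ((k + 1) ^ 2) =
      q ^ (k ^ 2) * (q ^ 2) ^ (n + 1 + k : ℤ) := by
    simp only [← zpow_natCast, ← zpow_mul, ← zpow_add₀ hq₀]
    congr 1
    push_cast
    ring
  have hz_sub : z * z ^ (k - 1) = z ^ k := by rw [← zpow_one_add₀ hz, add_sub_cancel]
  have hz_add : z⁻¹ * z ^ (k + 1) = z ^ k := by
    rw [zpow_add_one₀ hz, mul_comm, mul_inv_cancel_right₀ hz]
  rw [centralQBinom_succ (pow_ne_zero 2 hq₀) hq]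
  linear_combination
    -(centralQBinom (q ^ 2) n (k - 1)) *
        (z ^ k * hq_sub + q ^ (2 * n + 1) * q ^ ((k - 1) ^ 2) * hz_sub)
      - centralQBinom (q ^ 2) n (k + 1) *
        (z ^ k * hq_add + q ^ (2 * n + 1) * q ^ ((k + 1) ^ 2) * hz_add)

theorem finite_jacobi_triple_product {𝕜 : Type*} [Field 𝕜] [TopologicalSpace 𝕜]
    [IsTopologicalRing 𝕜] {q z : 𝕜} (hq₀ : q ≠ 0) (hq : ∀ n : ℕ, (q ^ 2) ^ (n + 1) ≠ 1)
    (hz : z ≠ 0) (n : ℕ) :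
    HasSum (fun k : ℤ => q ^ (k ^ 2) * z ^ k * centralQBinom (q ^ 2) n k)
      (qPochhammer (-(z * q)) (q ^ 2) n * qPochhammer (-(z⁻¹ * q)) (q ^ 2) n) := by
  induction n with
  | zero =>
    convert! hasSum_ite_eq (0 : ℤ) (1 : 𝕜) using 2 with k
    · rw [centralQBinom_zero]
      split_ifs with hk <;> simp [hk]
    · simp [qPochhammer]
  | succ n ih =>
    set P := qPochhammer (-(z * q)) (q ^ 2) n * qPochhammer (-(z⁻¹ * q)) (q ^ 2) n
    set c : ℤ → 𝕜 := fun k => q ^ (k ^ 2) * z ^ k * centralQBinom (q ^ 2) n k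
    have hsub : HasSum (fun k => c (k - 1)) P := (Equiv.hasSum_iff (f := c) (Equiv.subRight 1)).2 ih
    have hadd : HasSum (fun k => c (k + 1)) P := (Equiv.hasSum_iff (f := c) (Equiv.addRight 1)).2 ih
    have hproduct : qPochhammer (-(z * q)) (q ^ 2) (n + 1) *
        qPochhammer (-(z⁻¹ * q)) (q ^ 2) (n + 1) =
        (1 + q ^ (4 * n + 2)) * P + z * q ^ (2 * n + 1) * P + z⁻¹ * q ^ (2 * n + 1) * P := by
      simp only [qPochhammer_succ, P]
      field_simp
      ring
    rw [hproduct]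
    simp only [zpow_sq_mul_centralQBinom_succ hq₀ hq hz]
    exact ((ih.mul_left _).add (hsub.mul_left _)).add (hadd.mul_left _)

lemma summable_norm_zpow_sq_mul_zpow {𝕜 : Type*} [NormedField 𝕜] {q : 𝕜} (hq : ‖q‖ < 1) (z : 𝕜) :
    Summable fun k : ℤ => ‖q ^ (k ^ 2) * z ^ k‖ := by
  have hnat : ∀ w : 𝕜, Summable fun n : ℕ => ‖q ^ (n ^ 2) * w ^ n‖ := fun w => by
    have hsmall : ∀ᶠ n : ℕ in atTop, ‖q‖ ^ n * ‖w‖ < 1 / 2 :=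
      ((tendsto_pow_atTop_nhds_zero_of_lt_one (norm_nonneg q) hq).mul_const ‖w‖).eventually_lt_const
        (by norm_num)
    refine summable_geometric_two.of_norm_bounded_eventually_nat ?_
    filter_upwards [hsmall] with n hn
    calc ‖‖q ^ (n ^ 2) * w ^ n‖‖ = (‖q‖ ^ n * ‖w‖) ^ n := by
          simp only [norm_norm, norm_mul, norm_pow, mul_pow, ← pow_mul, sq]
      _ ≤ (1 / 2) ^ n := by gcongr
  refine .of_nat_of_neg ((hnat z).congr fun n => ?_) ((hnat z⁻¹).congr fun n => ?_)
  · norm_cast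
  · rw [neg_sq, zpow_neg, ← inv_zpow]
    norm_cast

lemma pow_ne_one_of_norm_lt_one {𝕜 : Type*} [NormedDivisionRing 𝕜] {q : 𝕜} (hq : ‖q‖ < 1) {n : ℕ}
    (hn : n ≠ 0) : q ^ n ≠ 1 := fun h =>
  (pow_lt_one₀ (norm_nonneg q) hq hn).ne (by rw [← norm_pow, h, norm_one])

variable {𝕜 : Type*} [NormedField 𝕜] [CompleteSpace 𝕜] {q : 𝕜}

lemma qPochhammerInf_self_ne_zero (hq : ‖q‖ < 1) : qPochhammerInf q q ≠ 0 :=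
  qPochhammerInf_ne_zero hq fun j => by
    simpa only [pow_succ'] using pow_ne_one_of_norm_lt_one hq j.succ_ne_zero

lemma tendsto_recipQFactorial_natCast (hq : ‖q‖ < 1) :
    Tendsto (fun m : ℕ => recipQFactorial q m) atTop (𝓝 (qPochhammerInf q q)⁻¹) :=
  (tendsto_qPochhammer q hq).inv₀ (qPochhammerInf_self_ne_zero hq)

lemma tendsto_centralQBinom (hq : ‖q‖ < 1) (k : ℤ) :
    Tendsto (fun n => centralQBinom q n k) atTop (𝓝 (qPochhammerInf q q)⁻¹) := by
  have hrecip : Tendsto (recipQFactorial q) atTop (𝓝 (qPochhammerInf q q)⁻¹) := by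
    rw [← Nat.map_cast_int_atTop, tendsto_map'_iff]
    exact tendsto_recipQFactorial_natCast hq
  have hadd : Tendsto (fun n : ℕ => (n : ℤ) + k) atTop atTop :=
    tendsto_atTop_add_const_right _ k tendsto_natCast_atTop_atTop
  have hsub : Tendsto (fun n : ℕ => (n : ℤ) - k) atTop atTop :=
    tendsto_atTop_add_const_right _ (-k) tendsto_natCast_atTop_atTop
  have hdouble : Tendsto (fun n : ℕ => qPochhammer q q (2 * n)) atTop (𝓝 (qPochhammerInf q q)) :=
    (tendsto_qPochhammer q hq).comp (tendsto_id.const_mul_atTop' two_pos)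
  simpa only [centralQBinom, Function.comp_def,
    mul_inv_cancel_left₀ (qPochhammerInf_self_ne_zero hq)] using
    hdouble.mul ((hrecip.comp hadd).mul (hrecip.comp hsub))

lemma exists_norm_recipQFactorial_le (hq : ‖q‖ < 1) : ∃ C, ∀ m, ‖recipQFactorial q m‖ ≤ C := by
  obtain ⟨C, hC⟩ :=
    (Metric.isBounded_range_of_tendsto _ (tendsto_recipQFactorial_natCast hq)).exists_norm_le
  rw [Set.forall_mem_range] at hC
  refine ⟨C, fun m => ?_⟩
  rcases m with m | m
  · exact hC m
  · simpa [recipQFactorial] using (norm_nonneg _).trans (hC 0)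

lemma exists_norm_centralQBinom_le (hq : ‖q‖ < 1) : ∃ C, ∀ n k, ‖centralQBinom q n k‖ ≤ C := by
  obtain ⟨A, hA⟩ := (Metric.isBounded_range_of_tendsto _ (tendsto_qPochhammer q hq)).exists_norm_le
  obtain ⟨B, hB⟩ := exists_norm_recipQFactorial_le hq
  rw [Set.forall_mem_range] at hA
  have hA₀ : 0 ≤ A := (norm_nonneg _).trans (hA 0)
  have hB₀ : 0 ≤ B := (norm_nonneg _).trans (hB 0)
  refine ⟨A * (B * B), fun n k => ?_⟩
  rw [centralQBinom, norm_mul, norm_mul]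
  gcongr
  exacts [hA _, hB _, hB _]

theorem jacobi_triple_product (hq : ‖q‖ < 1) {z : 𝕜} (hz : z ≠ 0) :
    HasSum (fun k : ℤ => q ^ (k ^ 2) * z ^ k) (qPochhammerInf (q ^ 2) (q ^ 2) *
      (qPochhammerInf (-(z * q)) (q ^ 2) * qPochhammerInf (-(z⁻¹ * q)) (q ^ 2))) := by
  have hsummable := summable_norm_zpow_sq_mul_zpow hq z
  rw [hsummable.of_norm.hasSum_iff]
  rcases eq_or_ne q 0 with rfl | hq₀
  · rw [tsum_eq_single 0 fun k hk => by simp [zero_zpow _ (pow_ne_zero 2 hk)]]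
    simp [qPochhammerInf]
  have hQ : ‖q ^ 2‖ < 1 := by simpa using pow_lt_one₀ (norm_nonneg q) hq two_ne_zero
  have hE := qPochhammerInf_self_ne_zero hQ
  obtain ⟨C, hC⟩ := exists_norm_centralQBinom_le hQ
  have hseries : Tendsto (fun n => ∑' k : ℤ, q ^ (k ^ 2) * z ^ k * centralQBinom (q ^ 2) n k) atTop
      (𝓝 (∑' k : ℤ, q ^ (k ^ 2) * z ^ k * (qPochhammerInf (q ^ 2) (q ^ 2))⁻¹)) := by
    refine tendsto_tsum_of_dominated_convergence (hsummable.mul_right C)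
      (fun k => (tendsto_centralQBinom hQ k).const_mul _) (.of_forall fun n k => ?_)
    rw [norm_mul]
    gcongr
    exact hC n k
  have hproduct := (tendsto_qPochhammer (-(z * q)) hQ).mul (tendsto_qPochhammer (-(z⁻¹ * q)) hQ)
  have hfinite (n : ℕ) := (finite_jacobi_triple_product hq₀
    (fun m => pow_ne_one_of_norm_lt_one hQ m.succ_ne_zero) hz n).tsum_eq
  simp only [hfinite, tsum_mul_right] at hseries
  rw [← tendsto_nhds_unique hseries hproduct, mul_comm, inv_mul_cancel_right₀ hE]

end TripleProduct

theorem theta4_eq_qPochhammerInf {q : ℝ} (hq : |q| < 1) :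
    theta4 q = qPochhammerInf (q ^ 2) (q ^ 2) * qPochhammerInf q (q ^ 2) ^ 2 := by
  have h := (jacobi_triple_product (𝕜 := ℝ) hq (neg_ne_zero.2 one_ne_zero)).tsum_eq
  simp only [inv_neg, inv_one, neg_one_mul, neg_neg] at h
  simpa only [theta4, mul_comm, sq (qPochhammerInf q _)] using h

section LogConcavity

lemma summable_log_one_sub_mul_pow (a : ℝ) {q : ℝ} (hq : |q| < 1) :
    Summable fun j : ℕ => Real.log (1 - a * q ^ j) :=
  Real.summable_log_one_add_of_summable (summable_norm_mul_pow a hq).of_norm.neg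

lemma exp_tsum_log_one_sub_mul_pow {a q : ℝ} (hq : |q| < 1) (ha : ∀ j : ℕ, a * q ^ j < 1) :
    Real.exp (∑' j : ℕ, Real.log (1 - a * q ^ j)) = qPochhammerInf a q :=
  Real.rexp_tsum_eq_tprod (fun j => sub_pos.2 (ha j)) (summable_log_one_sub_mul_pow a hq)

lemma qPochhammerInf_pos {a q : ℝ} (hq : |q| < 1) (ha : ∀ j : ℕ, a * q ^ j < 1) :
    0 < qPochhammerInf a q :=
  exp_tsum_log_one_sub_mul_pow hq ha ▸ Real.exp_pos _

lemma log_qPochhammerInf {a q : ℝ} (hq : |q| < 1) (ha : ∀ j : ℕ, a * q ^ j < 1) :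
    Real.log (qPochhammerInf a q) = ∑' j : ℕ, Real.log (1 - a * q ^ j) := by
  rw [← exp_tsum_log_one_sub_mul_pow hq ha, Real.log_exp]

lemma one_sub_exp_neg_pos {x : ℝ} (hx : 0 < x) : 0 < 1 - Real.exp (-x) :=
  sub_pos.2 (Real.exp_lt_one_iff.2 (neg_neg_of_pos hx))

lemma strictMonoOn_exp_sub_one_div :
    StrictMonoOn (fun x : ℝ => (Real.exp x - 1) / x) (Set.Ioi 0) := by
  intro x hx y hy hxy
  simpa using strictConvexOn_exp.secant_strict_mono (Set.mem_univ 0) (Set.mem_univ x)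
    (Set.mem_univ y) hx.ne' hy.ne' hxy

lemma hasDerivAt_log_one_sub_exp_neg_exp (s : ℝ) :
    HasDerivAt (fun s => Real.log (1 - Real.exp (-Real.exp s)))
      ((Real.exp (Real.exp s) - 1) / Real.exp s)⁻¹ s := by
  have hpos := one_sub_exp_neg_pos (Real.exp_pos s)
  convert! ((Real.hasDerivAt_exp s).fun_neg.exp.const_sub 1).log hpos.ne' using 1
  rw [Real.exp_neg] at hpos ⊢
  field_simp

lemma strictConcaveOn_log_one_sub_exp_neg_exp :
    StrictConcaveOn ℝ Set.univ fun s : ℝ => Real.log (1 - Real.exp (-Real.exp s)) := by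
  refine StrictAnti.strictConcaveOn_univ_of_deriv (continuous_iff_continuousAt.2 fun s =>
    (hasDerivAt_log_one_sub_exp_neg_exp s).continuousAt) fun s t hst => ?_
  rw [(hasDerivAt_log_one_sub_exp_neg_exp s).deriv, (hasDerivAt_log_one_sub_exp_neg_exp t).deriv]
  have hpos : 0 < (Real.exp (Real.exp s) - 1) / Real.exp s :=
    div_pos (sub_pos.2 (Real.one_lt_exp_iff.2 (Real.exp_pos s))) (Real.exp_pos s)
  exact inv_strictAnti₀ hpos (strictMonoOn_exp_sub_one_div (Real.exp_pos s) (Real.exp_pos t)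
    (Real.exp_lt_exp.2 hst))

theorem strictConcaveOn_tsum {ι E : Type*} [Nonempty ι] [AddCommMonoid E] [Module ℝ E] {s : Set E}
    {f : ι → E → ℝ} (hf : ∀ i, StrictConcaveOn ℝ s (f i))
    (hsum : ∀ x ∈ s, Summable fun i => f i x) :
    StrictConcaveOn ℝ s fun x => ∑' i, f i x := by
  have hconv : Convex ℝ s := (hf (Classical.arbitrary ι)).1
  refine ⟨hconv, fun x hx y hy hxy a b ha hb hab => ?_⟩
  have hsx := (hsum x hx).mul_left a
  have hsy := (hsum y hy).mul_left b
  have hlt (i : ι) : a * f i x + b * f i y < f i (a • x + b • y) := (hf i).2 hx hy hxy ha hb hab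
  simp only [smul_eq_mul, ← tsum_mul_left]
  rw [← hsx.tsum_add hsy]
  exact (hsx.add hsy).tsum_lt_tsum (fun i => (hlt i).le) (hlt (Classical.arbitrary ι))
    (hsum _ (hconv hx hy ha.le hb.le hab))

lemma abs_exp_neg_lt_one {x : ℝ} (hx : 0 < x) : |Real.exp (-x)| < 1 := by
  rwa [Real.abs_exp, Real.exp_lt_one_iff, neg_lt_zero]

lemma exp_neg_mul_exp_neg_pow (x y : ℝ) (j : ℕ) :
    Real.exp (-x) * Real.exp (-y) ^ j = Real.exp (-(x + j * y)) := by
  rw [← Real.exp_nat_mul, ← Real.exp_add, mul_neg, neg_add]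

lemma exp_neg_mul_exp_neg_pow_lt_one {x y : ℝ} (hx : 0 < x) (hy : 0 < y) (j : ℕ) :
    Real.exp (-x) * Real.exp (-y) ^ j < 1 := by
  rw [exp_neg_mul_exp_neg_pow, Real.exp_lt_one_iff, neg_lt_zero]
  positivity

lemma qPochhammerInf_exp_neg_pos {x y : ℝ} (hx : 0 < x) (hy : 0 < y) :
    0 < qPochhammerInf (Real.exp (-x)) (Real.exp (-y)) :=
  qPochhammerInf_pos (abs_exp_neg_lt_one hy) (exp_neg_mul_exp_neg_pow_lt_one hx hy)

theorem strictConcaveOn_log_qPochhammerInf_exp_neg_exp {c d : ℝ} (hc : 0 < c) (hd : 0 < d) :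
    StrictConcaveOn ℝ Set.univ fun s : ℝ => Real.log
      (qPochhammerInf (Real.exp (-(c * Real.exp s))) (Real.exp (-(d * Real.exp s)))) := by
  have hcs (s : ℝ) : 0 < c * Real.exp s := mul_pos hc (Real.exp_pos s)
  have hds (s : ℝ) : 0 < d * Real.exp s := mul_pos hd (Real.exp_pos s)
  simp only [log_qPochhammerInf (abs_exp_neg_lt_one (hds _))
    (exp_neg_mul_exp_neg_pow_lt_one (hcs _) (hds _))]
  refine strictConcaveOn_tsum (fun j => ?_)
    fun s _ => summable_log_one_sub_mul_pow _ (abs_exp_neg_lt_one (hds s))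
  have hexponent (s : ℝ) : c * Real.exp s + j * (d * Real.exp s) =
      Real.exp (Real.log (c + j * d) + s) := by
    rw [Real.exp_add, Real.exp_log (by positivity)]
    ring
  simpa only [exp_neg_mul_exp_neg_pow, hexponent, Function.comp_def, Set.preimage_univ] using
    strictConcaveOn_log_one_sub_exp_neg_exp.translate_right (Real.log (c + j * d))

lemma theta4_exp_neg {x : ℝ} (hx : 0 < x) :
    theta4 (Real.exp (-x)) = qPochhammerInf (Real.exp (-(2 * x))) (Real.exp (-(2 * x))) *
      qPochhammerInf (Real.exp (-x)) (Real.exp (-(2 * x))) ^ 2 := by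
  rw [theta4_eq_qPochhammerInf (abs_exp_neg_lt_one hx), ← Real.exp_nat_mul, Nat.cast_two, mul_neg]

lemma theta4_exp_neg_pos {x : ℝ} (hx : 0 < x) : 0 < theta4 (Real.exp (-x)) := by
  have h2x : 0 < 2 * x := mul_pos two_pos hx
  rw [theta4_exp_neg hx]
  exact mul_pos (qPochhammerInf_exp_neg_pos h2x h2x) (pow_pos (qPochhammerInf_exp_neg_pos hx h2x) 2)

lemma log_theta4_exp_neg {x : ℝ} (hx : 0 < x) :
    Real.log (theta4 (Real.exp (-x))) =
      Real.log (qPochhammerInf (Real.exp (-(2 * x))) (Real.exp (-(2 * x)))) +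
        2 * Real.log (qPochhammerInf (Real.exp (-x)) (Real.exp (-(2 * x)))) := by
  have h2x : 0 < 2 * x := mul_pos two_pos hx
  rw [theta4_exp_neg hx, Real.log_mul (qPochhammerInf_exp_neg_pos h2x h2x).ne'
    (pow_pos (qPochhammerInf_exp_neg_pos hx h2x) 2).ne', Real.log_pow, Nat.cast_two]

theorem strictConcaveOn_log_theta4_exp_neg_exp :
    StrictConcaveOn ℝ Set.univ fun s : ℝ => Real.log (theta4 (Real.exp (-Real.exp s))) := by
  have heven := strictConcaveOn_log_qPochhammerInf_exp_neg_exp two_pos two_pos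
  have hodd := strictConcaveOn_log_qPochhammerInf_exp_neg_exp one_pos two_pos
  simp only [one_mul] at hodd
  simp only [log_theta4_exp_neg (Real.exp_pos _), two_mul (Real.log _)]
  exact heven.add (hodd.add hodd)

theorem theta4_exp_neg_mul_lt_sq {x y : ℝ} (hx : 0 < x) (hy : 0 < y) (hxy : x ≠ y) :
    theta4 (Real.exp (-x)) * theta4 (Real.exp (-y)) < theta4 (Real.exp (-√(x * y))) ^ 2 := by
  have hmid := strictConcaveOn_log_theta4_exp_neg_exp.2 (Set.mem_univ (Real.log x))
    (Set.mem_univ (Real.log y)) (Real.log_injOn_pos.ne hx hy hxy) one_half_pos one_half_pos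
    (add_halves 1)
  have hsqrt : Real.exp (1 / 2 * Real.log x + 1 / 2 * Real.log y) = √(x * y) := by
    rw [← mul_add, ← Real.log_mul hx.ne' hy.ne', Real.sqrt_eq_rpow,
      Real.rpow_def_of_pos (mul_pos hx hy), mul_comm]
  simp only [smul_eq_mul, hsqrt, Real.exp_log hx, Real.exp_log hy] at hmid
  have hθx := theta4_exp_neg_pos hx
  have hθy := theta4_exp_neg_pos hy
  have hθ := theta4_exp_neg_pos (Real.sqrt_pos.2 (mul_pos hx hy))
  rw [← Real.log_lt_log_iff (mul_pos hθx hθy) (pow_pos hθ 2), Real.log_mul hθx.ne' hθy.ne',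
    Real.log_pow, Nat.cast_two]
  linarith

end LogConcavity

theorem theta4_product_max (α t : ℝ) (hα : 0 < α) (ht : 0 < t) :
    theta4 (Real.exp (-Real.pi * t * α^2)) * theta4 (Real.exp (-Real.pi * t * α^(-2:ℤ))) ≤
      theta4 (Real.exp (-Real.pi * t)) ^ 2 ∧
    (theta4 (Real.exp (-Real.pi * t * α^2)) * theta4 (Real.exp (-Real.pi * t * α^(-2:ℤ))) =
        theta4 (Real.exp (-Real.pi * t)) ^ 2 ↔ α = 1) := by
  rcases eq_or_ne α 1 with rfl | hα₁
  · simp [sq]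
  have hu : 0 < Real.pi * t := mul_pos Real.pi_pos ht
  have hzpow : α ^ (-2 : ℤ) = (α ^ 2)⁻¹ := by rw [zpow_neg, zpow_ofNat]
  have hne : Real.pi * t * α ^ 2 ≠ Real.pi * t * α ^ (-2 : ℤ) :=
    (mul_right_injective₀ hu.ne').ne
      (mod_cast (zpow_right_injective₀ hα hα₁).ne (by decide : (2 : ℤ) ≠ -2))
  have hsqrt : √(Real.pi * t * α ^ 2 * (Real.pi * t * α ^ (-2 : ℤ))) = Real.pi * t := by
    rw [hzpow, mul_mul_mul_comm, mul_inv_cancel₀ (by positivity), mul_one, Real.sqrt_mul_self hu.le]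
  have hlt := theta4_exp_neg_mul_lt_sq (by positivity) (by positivity) hne
  simp only [hsqrt, ← neg_mul] at hlt
  exact ⟨hlt.le, fun heq => absurd heq hlt.ne, fun h => absurd h hα₁⟩
end

section
/- Borwein cubic identity: for q ∈ (0,1), a(q)³ = b(q)³ + c(q)³, where a(q) = ∑_{(k,l)∈ℤ²} q^{k²+kl+l²}, b(q) = ∑_{(k,l)∈ℤ²} q^{k²+kl+l²} e^{2πi(k-l)/3}, and c(q) = ∑_{(k,l)∈ℤ²} q^{(k+1/3)²+(k+1/3)(l+1/3)+(l+1/3)²}. -/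
/-!
Encode `(k, l) ∈ ℤ²` as the Eisenstein integer `k - lω`, `ω = exp (2πi/3)`, whose norm is
`k² + kl + l²` and whose residue modulo `λ = 1 - ω` is that of the charge `k - l` modulo `3`. The
exponents of `c` are then the norms on the coset of `λ/3`. Multiplication by `ω` permutes this coset
and raises charges by `1` modulo `3`, so the twists of `c` by the nontrivial cubic characters
vanish. Expand cubes over triples and filter by total charge with the cube roots of unity: `c³` is
three times the theta series of the triples of total charge `0` in the coset, while
`a³ + ω⁻¹b³ + ω⁻²b³ = a³ - b³` is three times that of the triples of total charge `1` in the
lattice. The unitary Fourier matrix `λ⁻¹ (1, 1, 1; 1, ω, ω²; 1, ω², ω)` carries the former triples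
bijectively to the latter.
-/

namespace BorweinCubic

open Finset

section RootOfUnityFilter

variable {K : Type*} [Field K] {ζ : K} {k : ℕ}

lemma sum_pow_zpow_eq_ite (hζ : IsPrimitiveRoot ζ k) (n : ℤ) :
    ∑ j ∈ range k, (ζ ^ j) ^ n = if (k : ℤ) ∣ n then (k : K) else 0 := by
  have hcomm (j : ℕ) : (ζ ^ j) ^ n = (ζ ^ n) ^ j := by
    rw [← zpow_natCast, ← zpow_natCast, zpow_comm]
  simp only [hcomm]
  split_ifs with hn
  · simp [(hζ.zpow_eq_one_iff_dvd n).2 hn]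
  · have hne : 1 - ζ ^ n ≠ 0 :=
      sub_ne_zero.2 fun h => hn ((hζ.zpow_eq_one_iff_dvd n).1 h.symm)
    have hpow : (ζ ^ n) ^ k = 1 := by rw [← hcomm, hζ.pow_eq_one, one_zpow]
    refine (mul_eq_zero.1 ?_).resolve_left hne
    rw [mul_neg_geom_sum, hpow, sub_self]

variable [TopologicalSpace K] [IsTopologicalSemiring K] [T2Space K] {ι : Type*}

lemma sum_eq_mul_tsum_of_hasSum_zpow (hζ : IsPrimitiveRoot ζ k) {f : ι → K} {e : ι → ℤ} {S : ℕ → K}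
    (hS : ∀ j, HasSum (fun x => f x * (ζ ^ j) ^ e x) (S j)) :
    ∑ j ∈ range k, S j = k * ∑' x : {x | (k : ℤ) ∣ e x}, f x := by
  rw [← (hasSum_sum fun j _ => hS j).tsum_eq, _root_.tsum_subtype, ← tsum_mul_left]
  refine tsum_congr fun x => ?_
  rw [← mul_sum, sum_pow_zpow_eq_ite hζ]
  simp [Set.indicator_apply, mul_comm]

end RootOfUnityFilter

lemma hasSum_tsum_pow_three {R ι : Type*} [NormedRing R] [CompleteSpace R] {f : ι → R}
    (hf : Summable fun i => ‖f i‖) :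
    HasSum (fun x : ι × ι × ι => f x.1 * (f x.2.1 * f x.2.2)) ((∑' i, f i) ^ 3) := by
  have hf₂ : Summable fun x : ι × ι => ‖f x.1 * f x.2‖ := hf.mul_norm hf
  rw [pow_three, tsum_mul_tsum_of_summable_norm hf hf, tsum_mul_tsum_of_summable_norm hf hf₂]
  exact (summable_mul_of_summable_norm hf hf₂).hasSum

lemma summable_rpow_add_sq {q : ℝ} (hq : q ∈ Set.Ioo 0 1) (s : ℝ) :
    Summable fun k : ℤ => q ^ ((k + s) ^ 2) := by
  have ht : 0 < -Real.log q / Real.pi :=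
    div_pos (neg_pos.2 (Real.log_neg hq.1 hq.2)) Real.pi_pos
  refine (HurwitzKernelBounds.summable_f_int 0 s ht).congr fun k => ?_
  rw [HurwitzKernelBounds.f_int, pow_zero, one_mul, Real.rpow_def_of_pos hq.1]
  congr 1
  field_simp

/-- The norm of the Eisenstein integer `k - lω` encoded by `p = (k, l)`, translated by
`s * (1 - ω)`. -/
def shiftedNorm (s : ℝ) (p : ℤ × ℤ) : ℝ := (p.1 + s) ^ 2 + (p.1 + s) * (p.2 + s) + (p.2 + s) ^ 2

/-- The charge of an Eisenstein integer: modulo `3` it is the residue modulo `1 - ω`. -/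
def charge (p : ℤ × ℤ) : ℤ := p.1 - p.2

/-- The cubic theta function on the coset of `s * (1 - ω)`, twisted by the character
`p ↦ z ^ charge p`: `a`, `b`, `c` are the cases `(s, z) = (0, 1)`, `(0, ω)`, `(1/3, 1)`. -/
noncomputable def cubicTheta (q s : ℝ) (z : ℂ) : ℂ :=
  ∑' p, ((q ^ shiftedNorm s p : ℝ) : ℂ) * z ^ charge p

lemma summable_rpow_shiftedNorm {q : ℝ} (hq : q ∈ Set.Ioo 0 1) (s : ℝ) :
    Summable fun p => q ^ shiftedNorm s p := by
  have hr : q ^ (1 / 2 : ℝ) ∈ Set.Ioo 0 1 :=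
    ⟨Real.rpow_pos_of_pos hq.1 _, Real.rpow_lt_one hq.1.le hq.2 (by norm_num)⟩
  have hsq := summable_rpow_add_sq hr s
  have hprod := hsq.mul_of_nonneg hsq (fun _ => Real.rpow_nonneg hr.1.le _)
    (fun _ => Real.rpow_nonneg hr.1.le _)
  refine hprod.of_nonneg_of_le (fun p => Real.rpow_nonneg hq.1.le _) fun p => ?_
  rw [← Real.rpow_mul hq.1.le, ← Real.rpow_mul hq.1.le, ← Real.rpow_add hq.1]
  apply Real.rpow_le_rpow_of_exponent_ge hq.1 hq.2.le
  rw [shiftedNorm]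
  linarith [sq_nonneg ((p.1 + s) + (p.2 + s))]

/-- Multiplication by `ω` on Eisenstein integers. -/
def mulOmega : ℤ × ℤ ≃ ℤ × ℤ where
  toFun p := (p.2, -p.1 - p.2)
  invFun p := (-p.1 - p.2, p.1)
  left_inv p := Prod.ext (by dsimp only; ring) rfl
  right_inv p := Prod.ext rfl (by dsimp only; ring)

lemma shiftedNorm_swap (s : ℝ) (p : ℤ × ℤ) : shiftedNorm s p.swap = shiftedNorm s p := by
  simp only [shiftedNorm, Prod.fst_swap, Prod.snd_swap]
  ring

lemma cubicTheta_inv (q s : ℝ) (z : ℂ) : cubicTheta q s z⁻¹ = cubicTheta q s z := by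
  rw [cubicTheta, ← (Equiv.prodComm ℤ ℤ).tsum_eq]
  refine tsum_congr fun p => ?_
  have hcharge : charge p.swap = -charge p := (neg_sub _ _).symm
  rw [Equiv.prodComm_apply, shiftedNorm_swap, hcharge, inv_zpow', neg_neg]

lemma conj_cubicTheta (q s : ℝ) {z : ℂ} (hz : ‖z‖ = 1) :
    starRingEnd ℂ (cubicTheta q s z) = cubicTheta q s z :=
  calc
    starRingEnd ℂ (cubicTheta q s z) = cubicTheta q s (starRingEnd ℂ z) := by
      simp [cubicTheta, Complex.conj_tsum]
    _ = cubicTheta q s z := by rw [← Complex.inv_eq_conj hz, cubicTheta_inv]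

-- The rotation `p ↦ ωp + ω` about `-(1 - ω)/3` raises charges by `1` modulo `3`.
lemma cubicTheta_one_third_eq_zero (q : ℝ) {z : ℂ} (hz : z ^ 3 = 1) (hz₁ : z ≠ 1) :
    cubicTheta q (1 / 3) z = 0 := by
  have hz₀ : z ≠ 0 := by rintro rfl; norm_num at hz
  let rotation : ℤ × ℤ ≃ ℤ × ℤ := mulOmega.trans (Equiv.addRight (0, -1))
  have hnorm (p : ℤ × ℤ) : shiftedNorm (1 / 3) (rotation p) = shiftedNorm (1 / 3) p := by
    simp only [rotation, shiftedNorm, mulOmega, Equiv.trans_apply, Equiv.coe_fn_mk,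
      Equiv.coe_addRight, Prod.mk_add_mk]
    push_cast
    ring
  have hcharge (p : ℤ × ℤ) : charge (rotation p) = charge p + 1 + 3 * p.2 := by
    simp only [rotation, charge, mulOmega, Equiv.trans_apply, Equiv.coe_fn_mk,
      Equiv.coe_addRight, Prod.mk_add_mk]
    ring
  have hzpow (p : ℤ × ℤ) : z ^ charge (rotation p) = z * z ^ charge p := by
    have hz' : z ^ (3 : ℤ) = 1 := mod_cast hz
    rw [hcharge, zpow_add₀ hz₀, zpow_mul, hz', one_zpow, mul_one, zpow_add_one₀ hz₀, mul_comm]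
  have hmul : cubicTheta q (1 / 3) z = z * cubicTheta q (1 / 3) z := by
    nth_rw 1 [cubicTheta, ← rotation.tsum_eq]
    simp only [hnorm, hzpow, mul_left_comm _ z, tsum_mul_left, cubicTheta]
  by_contra hne
  exact hz₁ (mul_eq_right₀ hne |>.1 hmul.symm)

/-- Triples of Eisenstein integers. -/
abbrev Triple : Type := (ℤ × ℤ) × (ℤ × ℤ) × (ℤ × ℤ)

/-- The squared length of a triple, each component being translated by `s * (1 - ω)`. -/
def tripleNorm (s : ℝ) (x : Triple) : ℝ :=
  shiftedNorm s x.1 + (shiftedNorm s x.2.1 + shiftedNorm s x.2.2)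

/-- The total charge of a triple. -/
def tripleCharge (x : Triple) : ℤ := charge x.1 + (charge x.2.1 + charge x.2.2)

/-- The triples with total charge congruent to `r` modulo `3`. -/
def chargeClass (r : ℤ) : Set Triple := {x | 3 ∣ tripleCharge x - r}

lemma hasSum_cubicTheta_pow_three {q : ℝ} (hq : q ∈ Set.Ioo 0 1) (s : ℝ) {z : ℂ} (hz : ‖z‖ = 1) :
    HasSum (fun x => ((q ^ tripleNorm s x : ℝ) : ℂ) * z ^ tripleCharge x)
      (cubicTheta q s z ^ 3) := by
  have hz₀ : z ≠ 0 := by rintro rfl; norm_num at hz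
  have hsummable : Summable fun p => ‖((q ^ shiftedNorm s p : ℝ) : ℂ) * z ^ charge p‖ := by
    simpa [hz, abs_of_nonneg (Real.rpow_nonneg hq.1.le _)] using summable_rpow_shiftedNorm hq s
  refine (hasSum_tsum_pow_three hsummable).congr_fun fun x => ?_
  rw [tripleNorm, tripleCharge, Real.rpow_add hq.1, Real.rpow_add hq.1, zpow_add₀ hz₀,
    zpow_add₀ hz₀]
  push_cast
  ring

lemma sum_cubicTheta_pow_three_mul_zpow {q : ℝ} (hq : q ∈ Set.Ioo 0 1) (s : ℝ) (r : ℤ) {ζ : ℂ}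
    (hζ : IsPrimitiveRoot ζ 3) :
    ∑ j ∈ range 3, cubicTheta q s (ζ ^ j) ^ 3 * (ζ ^ j) ^ (-r) =
      3 * ∑' x : chargeClass r, ((q ^ tripleNorm s x : ℝ) : ℂ) := by
  have hterm (j : ℕ) :
      HasSum (fun x => ((q ^ tripleNorm s x : ℝ) : ℂ) * (ζ ^ j) ^ (tripleCharge x - r))
        (cubicTheta q s (ζ ^ j) ^ 3 * (ζ ^ j) ^ (-r)) := by
    have hnorm : ‖ζ ^ j‖ = 1 := by rw [norm_pow, hζ.norm'_eq_one three_ne_zero, one_pow]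
    refine ((hasSum_cubicTheta_pow_three hq s hnorm).mul_right _).congr_fun fun x => ?_
    rw [sub_eq_add_neg, zpow_add₀ (pow_ne_zero j (hζ.ne_zero three_ne_zero)), mul_assoc]
  exact_mod_cast sum_eq_mul_tsum_of_hasSum_zpow hζ hterm

/-- Parametrizes the triples whose sum is divisible by `1 - ω` by the quotient `m` and the last two
components. -/
def chargeZeroParam : Triple → Triple
  | (m, y, z) => (m - mulOmega m - y - z, y, z)

/-- The image of `chargeZeroParam` under the Fourier matrix `(1 - ω)⁻¹ (ω ^ (i * j))`, the domain
being translated by `(1 - ω) / 3`; the summand `(1, 0)` comes from this translation. -/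
def chargeOneParam : Triple → Triple
  | (m, y, z) => (m + (1, 0), m - y + mulOmega (mulOmega z), m + mulOmega (mulOmega y) - z)

lemma chargeZeroParam_injective : Function.Injective chargeZeroParam := by
  rintro ⟨⟨m₁, m₂⟩, ⟨y₁, y₂⟩, ⟨z₁, z₂⟩⟩ ⟨⟨m₁', m₂'⟩, ⟨y₁', y₂'⟩, ⟨z₁', z₂'⟩⟩ h
  simp only [chargeZeroParam, mulOmega, Equiv.coe_fn_mk, Prod.mk_sub_mk, Prod.mk.injEq] at h ⊢
  omega

lemma chargeOneParam_injective : Function.Injective chargeOneParam := by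
  rintro ⟨⟨m₁, m₂⟩, ⟨y₁, y₂⟩, ⟨z₁, z₂⟩⟩ ⟨⟨m₁', m₂'⟩, ⟨y₁', y₂'⟩, ⟨z₁', z₂'⟩⟩ h
  simp only [chargeOneParam, mulOmega, Equiv.coe_fn_mk, Prod.mk_add_mk, Prod.mk_sub_mk,
    Prod.mk.injEq] at h ⊢
  omega

lemma range_chargeZeroParam : Set.range chargeZeroParam = chargeClass 0 := by
  refine Set.Subset.antisymm ?_ ?_
  · rintro _ ⟨⟨⟨m₁, m₂⟩, ⟨y₁, y₂⟩, ⟨z₁, z₂⟩⟩, rfl⟩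
    simp only [chargeZeroParam, mulOmega, chargeClass, tripleCharge, charge, Equiv.coe_fn_mk,
      Prod.mk_sub_mk, Set.mem_ofPred_eq]
    omega
  · rintro ⟨⟨a₁, a₂⟩, ⟨b₁, b₂⟩, ⟨c₁, c₂⟩⟩ ⟨n, hn⟩
    refine ⟨((a₁ + b₁ + c₁ - n, -n), (b₁, b₂), (c₁, c₂)), ?_⟩
    simp only [chargeZeroParam, mulOmega, tripleCharge, charge, Equiv.coe_fn_mk, Prod.mk_sub_mk,
      Prod.mk.injEq, and_true] at hn ⊢
    omega

lemma range_chargeOneParam : Set.range chargeOneParam = chargeClass 1 := by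
  refine Set.Subset.antisymm ?_ ?_
  · rintro _ ⟨⟨⟨m₁, m₂⟩, ⟨y₁, y₂⟩, ⟨z₁, z₂⟩⟩, rfl⟩
    simp only [chargeOneParam, mulOmega, chargeClass, tripleCharge, charge, Equiv.coe_fn_mk,
      Prod.mk_add_mk, Prod.mk_sub_mk, Set.mem_ofPred_eq]
    omega
  · rintro ⟨⟨a₁, a₂⟩, ⟨b₁, b₂⟩, ⟨c₁, c₂⟩⟩ ⟨n, hn⟩
    -- Inverting the Fourier matrix: `m = a - 1`, `y = (m - b + ω²(m - c)) / (1 - ω)` and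
    -- `z = (ω²(m - b) + m - c) / (1 - ω)`.
    refine ⟨((a₁ - 1, a₂), (n + c₂ - b₁, n + a₂ - c₁), (n + b₂ - c₁, n + a₂ - b₁)), ?_⟩
    simp only [chargeOneParam, mulOmega, tripleCharge, charge, Equiv.coe_fn_mk, Prod.mk_add_mk,
      Prod.mk_sub_mk, Prod.mk.injEq] at hn ⊢
    omega

lemma tripleNorm_chargeZeroParam (x : Triple) :
    tripleNorm (1 / 3) (chargeZeroParam x) = tripleNorm 0 (chargeOneParam x) := by
  obtain ⟨m, y, z⟩ := x
  simp only [tripleNorm, shiftedNorm, chargeZeroParam, chargeOneParam, mulOmega, Equiv.coe_fn_mk,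
    Prod.fst_add, Prod.snd_add, Prod.fst_sub, Prod.snd_sub]
  push_cast
  ring

lemma tsum_chargeClass_zero_eq_tsum_chargeClass_one {E : Type*} [AddCommMonoid E]
    [TopologicalSpace E] (f : ℝ → E) :
    ∑' x : chargeClass 0, f (tripleNorm (1 / 3) x) = ∑' x : chargeClass 1, f (tripleNorm 0 x) := by
  rw [← range_chargeZeroParam, ← range_chargeOneParam,
    tsum_range (fun x => f (tripleNorm (1 / 3) x)) chargeZeroParam_injective,
    tsum_range (fun x => f (tripleNorm 0 x)) chargeOneParam_injective]
  simp only [tripleNorm_chargeZeroParam]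

lemma cubicTheta_pow_three_eq_add {q : ℝ} (hq : q ∈ Set.Ioo 0 1) {ζ : ℂ}
    (hζ : IsPrimitiveRoot ζ 3) :
    cubicTheta q 0 1 ^ 3 = cubicTheta q 0 ζ ^ 3 + cubicTheta q (1 / 3) 1 ^ 3 := by
  have hζ₁ : ζ ≠ 1 := hζ.ne_one (by norm_num)
  have hinv : ζ ^ 2 = ζ⁻¹ := eq_inv_of_mul_eq_one_left (by rw [← pow_succ, hζ.pow_eq_one])
  have hsum : 1 + ζ + ζ⁻¹ = 0 := by
    simpa [sum_range_succ, hinv] using hζ.geom_sum_eq_zero (by norm_num)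
  have htwist : cubicTheta q (1 / 3) ζ = 0 := cubicTheta_one_third_eq_zero q hζ.pow_eq_one hζ₁
  have hfilter : ∑ j ∈ range 3, cubicTheta q (1 / 3) (ζ ^ j) ^ 3 =
      ∑ j ∈ range 3, cubicTheta q 0 (ζ ^ j) ^ 3 * (ζ ^ j)⁻¹ := by
    have hcoset := sum_cubicTheta_pow_three_mul_zpow hq (1 / 3) 0 hζ
    have hlattice := sum_cubicTheta_pow_three_mul_zpow hq 0 1 hζ
    rw [tsum_chargeClass_zero_eq_tsum_chargeClass_one fun t => ((q ^ t : ℝ) : ℂ),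
      ← hlattice] at hcoset
    simpa only [neg_zero, zpow_zero, mul_one, zpow_neg_one] using hcoset
  have hexpand : cubicTheta q (1 / 3) 1 ^ 3 =
      cubicTheta q 0 1 ^ 3 + cubicTheta q 0 ζ ^ 3 * ζ⁻¹ + cubicTheta q 0 ζ ^ 3 * ζ := by
    simpa [sum_range_succ, hinv, cubicTheta_inv, htwist, -one_div] using hfilter
  linear_combination -hexpand - cubicTheta q 0 ζ ^ 3 * hsum

section Borwein

variable (q : ℝ)

lemma rpow_shiftedNorm_zero (p : ℤ × ℤ) :
    q ^ shiftedNorm 0 p = q ^ (p.1 ^ 2 + p.1 * p.2 + p.2 ^ 2) := by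
  rw [← Real.rpow_intCast, shiftedNorm]
  push_cast
  simp only [add_zero]

lemma cubicTheta_zero_one : cubicTheta q 0 1 = borA q := by
  simp [cubicTheta, borA, Complex.ofReal_tsum, rpow_shiftedNorm_zero]

lemma cubicTheta_one_third_one : cubicTheta q (1 / 3) 1 = borC q := by
  simp [cubicTheta, borC, Complex.ofReal_tsum, shiftedNorm]

lemma cubicTheta_zero_exp :
    cubicTheta q 0 (Complex.exp (2 * Real.pi * Complex.I / 3)) = borB q := by
  have hnorm : ‖Complex.exp (2 * Real.pi * Complex.I / 3)‖ = 1 :=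
    (Complex.isPrimitiveRoot_exp 3 three_ne_zero).norm'_eq_one three_ne_zero
  rw [← Complex.conj_eq_iff_re.1 (conj_cubicTheta q 0 hnorm), cubicTheta, borB]
  congr 3
  ext p
  rw [rpow_shiftedNorm_zero, charge, ← Complex.exp_int_mul]
  push_cast
  ring_nf

end Borwein

end BorweinCubic

open BorweinCubic

theorem borwein_cubic_identity (q : ℝ) (hq : q ∈ Set.Ioo (0:ℝ) 1) :
    borA q ^ 3 = borB q ^ 3 + borC q ^ 3 := by
  have hζ : IsPrimitiveRoot (Complex.exp (2 * Real.pi * Complex.I / 3)) 3 :=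
    Complex.isPrimitiveRoot_exp 3 three_ne_zero
  have hcubes := cubicTheta_pow_three_eq_add hq hζ
  rw [cubicTheta_zero_one, cubicTheta_zero_exp, cubicTheta_one_third_one] at hcubes
  exact_mod_cast hcubes
end
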